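/- arXiv:2103.07498 — 8 statements merged into one kernel-verified Lean document; each statement's English description precedes it below -/
import Mathlib

section
/- For all integers n ≥ 2 and k ≥ 0, the number of Fibonacci permutations of {1,…,n} having exactly k descents equals the binomial coefficient C(n−k, k) (interpreted as 0 when k > n−k). -/
open Finset

/-- The number of descents of a permutation of `Fin n`:
positions `i` with `i+1 < n` and `π(i) > π(i+1)`. -/
def descents {n : ℕ} (π : Equiv.Perm (Fin n)) : ℕ :=
  (Finset.univ.filter fun i : Fin n =>
    ∃ h : (i : ℕ) + 1 < n, π ⟨(i : ℕ) + 1, h⟩ < π i).card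

/-- Fibonacci permutations: permutations with `|π(i) - i| ≤ 1` for all `i`. -/
def fibPerms (n : ℕ) : Finset (Equiv.Perm (Fin n)) :=
  Finset.univ.filter fun π => ∀ i : Fin n, |(π i : ℤ) - (i : ℤ)| ≤ 1

/-- Sparse subsets of `{0,…,n-2}`. -/
def spT : ℕ → Finset (Finset ℕ)
  | 0 => {∅}
  | 1 => {∅}
  | (n+2) => spT (n+1) ∪ (spT n).image (insert n)

theorem mem_spT (n : ℕ) : ∀ S : Finset ℕ, S ∈ spT n ↔
    (∀ i ∈ S, i + 1 < n) ∧ (∀ i ∈ S, i + 1 ∉ S) := by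
  induction n using Nat.twoStepInduction with
  | zero =>
    intro S
    simp only [spT, mem_singleton]
    constructor
    · rintro rfl; simp
    · rintro ⟨h, -⟩
      exact Finset.eq_empty_of_forall_notMem fun i hi => by have := h i hi; omega
  | one =>
    intro S
    simp only [spT, mem_singleton]
    constructor
    · rintro rfl; simp
    · rintro ⟨h, -⟩
      exact Finset.eq_empty_of_forall_notMem fun i hi => by have := h i hi; omega
  | more n ih0 ih1 =>
    intro S
    simp only [spT, mem_union, mem_image, ih0, ih1]
    constructor
    · rintro (⟨h1, h2⟩ | ⟨U, ⟨h1, h2⟩, rfl⟩)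
      · exact ⟨fun i hi => by have := h1 i hi; omega, h2⟩
      · refine ⟨fun i hi => ?_, fun i hi hi' => ?_⟩
        · rcases mem_insert.1 hi with rfl | hi
          · omega
          · have := h1 i hi; omega
        · rcases mem_insert.1 hi with rfl | hi
          · rcases mem_insert.1 hi' with h | h
            · omega
            · have := h1 _ h; omega
          · rcases mem_insert.1 hi' with h | h
            · have := h1 _ hi; omega
            · exact h2 i hi h
    · rintro ⟨h1, h2⟩
      by_cases hn : n ∈ S
      · right
        refine ⟨S.erase n, ⟨fun i hi => ?_, fun i hi hi' => ?_⟩, insert_erase hn⟩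
        · have hi2 := mem_erase.1 hi
          have h3 := h1 i hi2.2
          have h4 := h2 i hi2.2
          have : i + 1 ≠ n := by rintro rfl; exact h4 hn
          have := hi2.1
          omega
        · exact h2 i (mem_of_mem_erase hi) (mem_of_mem_erase hi')
      · left
        refine ⟨fun i hi => ?_, h2⟩
        have h3 := h1 i hi
        have : i ≠ n := by rintro rfl; exact hn hi
        omega

theorem notMem_of_spT {n m : ℕ} {S : Finset ℕ} (h : S ∈ spT n) (hm : n ≤ m + 1) : m ∉ S := by
  intro h'
  have := ((mem_spT n S).1 h).1 m h'
  omega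

theorem card_spT (n : ℕ) : ∀ k, ((spT n).filter fun S => S.card = k).card
    = Nat.choose (n - k) k := by
  induction n using Nat.twoStepInduction with
  | zero =>
    intro k
    cases k with
    | zero => rfl
    | succ k => simp [spT, filter_singleton]
  | one =>
    intro k
    cases k with
    | zero => rfl
    | succ k => simp [spT, filter_singleton]
  | more n ih0 ih1 =>
    intro k
    have hd : Disjoint ((spT (n+1)).filter fun S => S.card = k)
        (((spT n).image (insert n)).filter fun S => S.card = k) := by
      rw [Finset.disjoint_left]
      intro S hS hS'
      have h1 := notMem_of_spT (m := n) (mem_filter.1 hS).1 (by omega)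
      obtain ⟨U, -, rfl⟩ := mem_image.1 (mem_filter.1 hS').1
      exact h1 (mem_insert_self _ _)
    rw [spT, filter_union, card_union_of_disjoint hd, ih1]
    cases k with
    | zero =>
      have : (((spT n).image (insert n)).filter fun S => S.card = 0) = ∅ := by
        apply Finset.eq_empty_of_forall_notMem
        intro S hS
        obtain ⟨hS, h0⟩ := mem_filter.1 hS
        obtain ⟨U, -, rfl⟩ := mem_image.1 hS
        have := card_eq_zero.1 h0
        simp at this
      rw [this]; simp
    | succ k =>
      have : (((spT n).image (insert n)).filter fun S => S.card = k + 1)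
          = ((spT n).filter fun S => S.card = k).image (insert n) := by
        ext S
        simp only [mem_filter, mem_image]
        constructor
        · rintro ⟨⟨U, hU, rfl⟩, h⟩
          rw [card_insert_of_notMem (notMem_of_spT hU (by omega))] at h
          exact ⟨U, ⟨hU, by omega⟩, rfl⟩
        · rintro ⟨U, ⟨hU, h⟩, rfl⟩
          rw [card_insert_of_notMem (notMem_of_spT hU (by omega))]
          exact ⟨⟨U, hU, rfl⟩, by omega⟩
      rw [this, card_image_of_injOn, ih0]
      · by_cases hk : k ≤ n
        · have e1 : n + 2 - (k + 1) = (n - k) + 1 := by omega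
          have e2 : n + 1 - (k + 1) = n - k := by omega
          rw [e1, e2, Nat.choose_succ_succ, add_comm]
        · have e1 : n + 2 - (k + 1) = 0 := by omega
          have e2 : n + 1 - (k + 1) = 0 := by omega
          have e3 : n - k = 0 := by omega
          rw [e1, e2, e3]
          obtain ⟨j, rfl⟩ : ∃ j, k = j + 1 := ⟨k - 1, by omega⟩
          simp
      · intro U hU V hV h
        have hU' := notMem_of_spT (m := n) (mem_filter.1 (mem_coe.1 hU)).1 (by omega)
        have hV' := notMem_of_spT (m := n) (mem_filter.1 (mem_coe.1 hV)).1 (by omega)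
        have h' : insert n U = insert n V := h
        rw [← erase_insert hU', h', erase_insert hV']

theorem mem_fib {n : ℕ} {π : Equiv.Perm (Fin n)} : π ∈ fibPerms n ↔
    ∀ i : Fin n, (π i).val ≤ i.val + 1 ∧ i.val ≤ (π i).val + 1 := by
  simp only [fibPerms, mem_filter, mem_univ, true_and, abs_le]
  refine forall_congr' fun i => ?_
  omega

theorem fib_up {n : ℕ} {π : Equiv.Perm (Fin n)} (hπ : π ∈ fibPerms n) :
    ∀ (i : ℕ) (h : i + 1 < n), (π ⟨i, by omega⟩).val = i + 1 → (π ⟨i+1, h⟩).val = i := by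
  rw [mem_fib] at hπ
  intro i
  induction i with
  | zero =>
    intro h h0
    obtain ⟨j, hj⟩ := π.surjective ⟨0, by omega⟩
    have hb := hπ j
    rw [hj] at hb
    have hj0 : j.val ≠ 0 := by
      intro e
      have e' : j = ⟨0, by omega⟩ := Fin.ext e
      rw [← e', hj] at h0
      simp at h0
    have e' : j = ⟨0+1, h⟩ := Fin.ext (by simp at hb ⊢; omega)
    rw [← e', hj]
  | succ i ih =>
    intro h h0
    obtain ⟨j, hj⟩ := π.surjective ⟨i+1, by omega⟩
    have hb := hπ j
    rw [hj] at hb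
    simp only at hb
    have hj0 : j.val ≠ i + 1 := by
      intro e
      have e' : j = ⟨i+1, by omega⟩ := Fin.ext e
      rw [← e', hj] at h0
      simp at h0
    have hj1 : j.val ≠ i := by
      intro e
      have e' : j = ⟨i, by omega⟩ := Fin.ext e
      have := ih (by omega) (by rw [← e', hj])
      omega
    have e' : j = ⟨i+1+1, h⟩ := Fin.ext (by simp; omega)
    rw [← e', hj]

theorem fib_inv {n : ℕ} {π : Equiv.Perm (Fin n)} (hπ : π ∈ fibPerms n) :
    π⁻¹ ∈ fibPerms n := by
  rw [mem_fib] at hπ ⊢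
  intro i
  have := hπ (π⁻¹ i)
  have e : π (π⁻¹ i) = i := by simp
  rw [e] at this
  omega

theorem fib_down {n : ℕ} {π : Equiv.Perm (Fin n)} (hπ : π ∈ fibPerms n)
    (i : ℕ) (h : i + 1 < n) (h1 : (π ⟨i+1, h⟩).val = i) : (π ⟨i, by omega⟩).val = i + 1 := by
  have e : π ⟨i+1, h⟩ = ⟨i, by omega⟩ := Fin.ext h1
  have h2 := fib_up (fib_inv hπ) i h (by rw [← e]; simp)
  have e2 : π⁻¹ ⟨i+1, h⟩ = ⟨i, by omega⟩ := Fin.ext h2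
  rw [← e2]; simp

/-- Descent set. -/
def desSet {n : ℕ} (π : Equiv.Perm (Fin n)) : Finset ℕ :=
  (Finset.univ.filter fun i : Fin n =>
    ∃ h : (i : ℕ) + 1 < n, π ⟨(i : ℕ) + 1, h⟩ < π i).map Fin.valEmbedding

theorem card_desSet {n : ℕ} (π : Equiv.Perm (Fin n)) : (desSet π).card = descents π := by
  rw [desSet, card_map, descents]

theorem mem_desSet {n : ℕ} {π : Equiv.Perm (Fin n)} (hπ : π ∈ fibPerms n) (i : ℕ) :
    i ∈ desSet π ↔ ∃ h : i + 1 < n, (π ⟨i, by omega⟩).val = i + 1 := by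
  have hb := mem_fib.1 hπ
  simp only [desSet, mem_map, mem_filter, mem_univ, true_and, Fin.valEmbedding_apply]
  constructor
  · rintro ⟨j, ⟨h, hlt⟩, rfl⟩
    refine ⟨h, ?_⟩
    have h1 := hb j
    have h2 := hb ⟨j.val + 1, h⟩
    have h3 : (π ⟨j.val + 1, h⟩).val < (π j).val := hlt
    simp only [Fin.eta] at h2 ⊢
    omega
  · rintro ⟨h, h1⟩
    refine ⟨⟨i, by omega⟩, ⟨h, ?_⟩, rfl⟩
    have := fib_up hπ i h h1
    rw [Fin.lt_def]
    simp only
    omega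

theorem desSet_mem {n : ℕ} {π : Equiv.Perm (Fin n)} (hπ : π ∈ fibPerms n) :
    desSet π ∈ spT n := by
  rw [mem_spT]
  refine ⟨fun i hi => ((mem_desSet hπ i).1 hi).1, fun i hi hi' => ?_⟩
  obtain ⟨h, h1⟩ := (mem_desSet hπ i).1 hi
  obtain ⟨h', h1'⟩ := (mem_desSet hπ _).1 hi'
  have := fib_up hπ i h h1
  omega

theorem desSet_inj {n : ℕ} {π ρ : Equiv.Perm (Fin n)} (hπ : π ∈ fibPerms n)
    (hρ : ρ ∈ fibPerms n) (h : desSet π = desSet ρ) : π = ρ := by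
  have key : ∀ i : ℕ, (∃ h : i + 1 < n, (π ⟨i, by omega⟩).val = i + 1) ↔
      (∃ h : i + 1 < n, (ρ ⟨i, by omega⟩).val = i + 1) := fun i => by
    rw [← mem_desSet hπ, ← mem_desSet hρ, h]
  have low : ∀ {σ τ : Equiv.Perm (Fin n)}, σ ∈ fibPerms n → τ ∈ fibPerms n →
      (∀ i : ℕ, (∃ h : i + 1 < n, (σ ⟨i, by omega⟩).val = i + 1) →
      (∃ h : i + 1 < n, (τ ⟨i, by omega⟩).val = i + 1)) →
      ∀ i : Fin n, (σ i).val + 1 = i.val → (τ i).val + 1 = i.val := by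
    intro σ τ hσ hτ hk i hi
    obtain ⟨i, hin⟩ := i
    cases i with
    | zero => simp at hi
    | succ i =>
      simp only at hi
      obtain ⟨_, h2⟩ := hk i ⟨hin, fib_down hσ i hin (by omega)⟩
      have := fib_up hτ i hin h2
      simp only
      omega
  have up : ∀ {σ τ : Equiv.Perm (Fin n)},
      (∀ i : ℕ, (∃ h : i + 1 < n, (σ ⟨i, by omega⟩).val = i + 1) →
      (∃ h : i + 1 < n, (τ ⟨i, by omega⟩).val = i + 1)) →
      ∀ i : Fin n, (σ i).val = i.val + 1 → (τ i).val = i.val + 1 := by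
    intro σ τ hk i hi
    obtain ⟨_, h⟩ := hk i.val ⟨by rw [← hi]; exact (σ i).isLt, hi⟩
    exact h
  ext i
  have a1 := low hπ hρ (fun i => (key i).1) i
  have a2 := low hρ hπ (fun i => (key i).2) i
  have a3 := up (fun i => (key i).1) i
  have a4 := up (fun i => (key i).2) i
  have b1 := mem_fib.1 hπ i
  have b2 := mem_fib.1 hρ i
  omega

theorem desSet_surj {n : ℕ} {S : Finset ℕ} (hS : S ∈ spT n) :
    ∃ π ∈ fibPerms n, desSet π = S := by
  obtain ⟨h1, h2⟩ := (mem_spT n S).1 hS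
  let g : ℕ → ℕ := fun i => if i ∈ S then i + 1 else if 1 ≤ i ∧ i - 1 ∈ S then i - 1 else i
  have hg : ∀ i, i < n → g i < n := by
    intro i hi
    simp only [g]
    split_ifs with c1 c2
    · exact h1 i c1
    · omega
    · omega
  have hgg : ∀ i, g (g i) = i := by
    intro i
    by_cases c1 : i ∈ S
    · have e : g i = i + 1 := by simp [g, c1]
      rw [e]
      simp [g, c1, h2 i c1]
    · by_cases c2 : 1 ≤ i ∧ i - 1 ∈ S
      · have e : g i = i - 1 := by simp only [g]; rw [if_neg c1, if_pos c2]
        rw [e]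
        simp only [g]
        rw [if_pos c2.2]
        omega
      · have e : g i = i := by simp only [g]; rw [if_neg c1, if_neg c2]
        rw [e, e]
  let f : Fin n → Fin n := fun i => ⟨g i.val, hg i.val i.isLt⟩
  have hf : Function.Involutive f := fun i => Fin.ext (hgg i.val)
  have hv : ∀ i, (hf.toPerm f i).val = g i.val := fun i => rfl
  have hm : hf.toPerm f ∈ fibPerms n := by
    rw [mem_fib]
    intro i
    rw [hv]
    simp only [g]
    split_ifs <;> omega
  refine ⟨hf.toPerm f, hm, ?_⟩
  ext i
  rw [mem_desSet hm]
  constructor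
  · rintro ⟨h, e⟩
    rw [hv] at e
    by_contra c
    simp only [g] at e
    rw [if_neg c] at e
    split_ifs at e <;> omega
  · intro c
    refine ⟨h1 i c, ?_⟩
    rw [hv]
    simp [g, c]

/-- The number of Fibonacci permutations of `{1,…,n}` with exactly `k` descents is
`C(n-k, k)`. -/
theorem fibPerms_descents_card (n k : ℕ) (hn : 2 ≤ n) :
    ((fibPerms n).filter fun π => descents π = k).card = Nat.choose (n - k) k := by
  rw [← card_spT]
  refine Finset.card_bij (fun π _ => desSet π) ?_ ?_ ?_
  · intro π hπ
    obtain ⟨h1, h2⟩ := mem_filter.1 hπ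
    exact mem_filter.2 ⟨desSet_mem h1, by rw [card_desSet, h2]⟩
  · intro π hπ ρ hρ h
    exact desSet_inj (mem_filter.1 hπ).1 (mem_filter.1 hρ).1 h
  · intro S hS
    obtain ⟨h1, h2⟩ := mem_filter.1 hS
    obtain ⟨π, hπ, rfl⟩ := desSet_surj h1
    exact ⟨π, mem_filter.2 ⟨hπ, by rw [← card_desSet, h2]⟩, rfl⟩
end

section
/- For every integer n ≥ 1, Σ_{(a_1,…,a_m) ∈ C_{≤2}(n)} Π_{i : a_i = 2} (1 + a_1 + ⋯ + a_{i−1}) = i_n, where the sum is over all compositions of n with parts in {1,2}, the product is over the indices i whose part a_i equals 2 (an empty product equals 1), and i_n is the number of involutions in the symmetric group S_n. -/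
open Finset

/-- The involutions of the symmetric group `S_n`. -/
def involutions (n : ℕ) : Finset (Equiv.Perm (Fin n)) :=
  Finset.univ.filter fun π => π * π = 1

/-- The compositions of `n` all of whose parts are `1` or `2`. -/
def compsLe2 (n : ℕ) : Finset (Composition n) :=
  Finset.univ.filter fun c => ∀ a ∈ c.blocks, a = 1 ∨ a = 2

def invW (l : List ℕ) : ℕ := ∏ i ∈ Finset.range l.length,
        (if l.getD i 0 = 2 then 1 + (l.take i).sum else 1)

lemma invW_append (l : List ℕ) (x : ℕ) :
    invW (l ++ [x]) = invW l * (if x = 2 then 1 + l.sum else 1) := by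
  unfold invW
  rw [List.length_append, List.length_singleton, Finset.prod_range_succ]
  congr 1
  · apply Finset.prod_congr rfl
    intro i hi
    have hi := Finset.mem_range.1 hi
    rw [List.getD_append _ _ _ _ hi, List.take_append_of_le_length hi.le]
  · simp

def invL : ℕ → Finset (List ℕ)
  | 0 => {[]}
  | 1 => {[1]}
  | n + 2 => (invL (n+1)).image (· ++ [1]) ∪ (invL n).image (· ++ [2])

lemma mem_invL (l : List ℕ) : ∀ n, l ∈ invL n ↔ l.sum = n ∧ ∀ a ∈ l, a = 1 ∨ a = 2 := by
  induction l using List.reverseRecOn with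
  | nil =>
    intro n
    match n with
    | 0 => simp [invL]
    | 1 => simp [invL]
    | n + 2 => simp [invL]
  | append_singleton l x ih =>
    intro n
    have key : ∀ y, (∀ a ∈ l ++ [y], a = 1 ∨ a = 2) ↔ (∀ a ∈ l, a = 1 ∨ a = 2) ∧ (y = 1 ∨ y = 2) := by
      intro y
      simp only [List.mem_append, List.mem_singleton]
      constructor
      · intro h
        exact ⟨fun a ha => h a (Or.inl ha), h y (Or.inr rfl)⟩
      · rintro ⟨h, h'⟩ a (ha | rfl)
        · exact h a ha
        · exact h'
    rw [key, List.sum_append, List.sum_singleton]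
    match n with
    | 0 =>
      simp only [invL, Finset.mem_singleton]
      constructor
      · intro h; simp at h
      · rintro ⟨h, -, h' | h'⟩ <;> omega
    | 1 =>
      have := ih 0
      simp only [invL, Finset.mem_singleton] at this ⊢
      constructor
      · intro h
        have h2 : l ++ [x] = [] ++ [1] := h
        have h3 := List.append_inj' h2 rfl
        have h4 : x = 1 := by simpa using h3.2
        have := this.1 h3.1
        exact ⟨by omega, this.2, Or.inl h4⟩
      · rintro ⟨h, h1, h' | h'⟩
        · rw [this.2 ⟨by omega, h1⟩, h']; rfl
        · omega
    | n + 2 =>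
      have h1 := ih (n+1)
      have h2 := ih n
      have app : ∀ (m : List ℕ) (y : ℕ), m ++ [y] = l ++ [x] ↔ m = l ∧ y = x := by
        intro m y
        constructor
        · intro h
          have h3 := List.append_inj' h rfl
          exact ⟨h3.1, by simpa using h3.2⟩
        · rintro ⟨rfl, rfl⟩; rfl
      simp only [invL, Finset.mem_union, Finset.mem_image, app]
      constructor
      · rintro (⟨m, hm, rfl, rfl⟩ | ⟨m, hm, rfl, rfl⟩)
        · have := h1.1 hm
          exact ⟨by omega, this.2, Or.inl rfl⟩
        · have := h2.1 hm
          exact ⟨by omega, this.2, Or.inr rfl⟩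
      · rintro ⟨h, h3, rfl | rfl⟩
        · exact Or.inl ⟨l, h1.2 ⟨by omega, h3⟩, rfl, rfl⟩
        · exact Or.inr ⟨l, h2.2 ⟨by omega, h3⟩, rfl, rfl⟩

lemma sum_invL (n : ℕ) : ∑ l ∈ invL (n+2), invW l =
    ∑ l ∈ invL (n+1), invW l + (n+1) * ∑ l ∈ invL n, invW l := by
  have hinj : ∀ y : ℕ, Function.Injective (fun m : List ℕ => m ++ [y]) :=
    fun y a b h => (List.append_inj' h rfl).1
  rw [invL, Finset.sum_union, Finset.sum_image (fun a _ b _ h => hinj 1 h),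
    Finset.sum_image (fun a _ b _ h => hinj 2 h), Finset.mul_sum]
  · congr 1
    · exact Finset.sum_congr rfl fun l _ => by simp [invW_append]
    · refine Finset.sum_congr rfl fun l hl => ?_
      rw [invW_append, if_pos rfl, ((mem_invL l n).1 hl).1, add_comm 1 n, mul_comm]
  · rw [Finset.disjoint_left]
    intro a ha hb
    obtain ⟨m, -, rfl⟩ := Finset.mem_image.1 ha
    obtain ⟨m', -, h⟩ := Finset.mem_image.1 hb
    have := (List.append_inj' h rfl).2
    simp at this

lemma sum_comps_eq (n : ℕ) : ∑ c ∈ compsLe2 n, invW c.blocks = ∑ l ∈ invL n, invW l := by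
  refine Finset.sum_bij (fun c _ => c.blocks) ?_ ?_ ?_ ?_
  · intro c hc
    exact (mem_invL _ _).2 ⟨c.blocks_sum, (Finset.mem_filter.1 hc).2⟩
  · intro a _ b _ h
    exact Composition.ext h
  · intro l hl
    have h := (mem_invL _ _).1 hl
    refine ⟨⟨l, fun {i} hi => by rcases h.2 i hi with h | h <;> omega, h.1⟩, ?_, rfl⟩
    exact Finset.mem_filter.2 ⟨Finset.mem_univ _, h.2⟩
  · intros; rfl

abbrev InvT (α : Type) := {π : Equiv.Perm α // π * π = 1}

lemma invT_congr {α β : Type} (e : α ≃ β) : Nat.card (InvT α) = Nat.card (InvT β) := by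
  refine Nat.card_congr (Equiv.subtypeEquiv e.permCongr ?_)
  intro π
  rw [← Equiv.permCongr_mul]
  constructor
  · intro h; rw [h]; ext; simp
  · intro h
    apply e.permCongr.injective
    rw [h]; ext; simp

lemma invT_sub {α : Type} (p : α → Prop) [DecidablePred p] :
    Nat.card {π : Equiv.Perm α // π * π = 1 ∧ ∀ a, ¬ p a → π a = a} = Nat.card (InvT (Subtype p)) := by
  symm
  refine Nat.card_congr ?_
  refine ((Equiv.Perm.subtypeEquivSubtypePerm p).subtypeEquiv
    (q := fun f => f.1 * f.1 = 1) ?_).trans ?_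
  · intro π
    have : ((Equiv.Perm.subtypeEquivSubtypePerm p) π).1 = Equiv.Perm.ofSubtype π := rfl
    rw [this, ← map_mul]
    constructor
    · intro h; rw [h, map_one]
    · intro h
      exact Equiv.Perm.ofSubtype_injective (h.trans (map_one _).symm)
  · exact (Equiv.subtypeSubtypeEquivSubtypeInter _ (fun f : Equiv.Perm α => f * f = 1)).trans
      (Equiv.subtypeEquivRight fun f => and_comm)

lemma inv_swap {α : Type} [DecidableEq α] (a b : α) (π : Equiv.Perm α) (h : π * π = 1)
    (hs : (π a = b ∧ π b = a) ∨ (π a = a ∧ π b = b)) :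
    (Equiv.swap a b * π) * (Equiv.swap a b * π) = 1 := by
  have hc : Equiv.swap a b * π = π * Equiv.swap a b := by
    rw [Equiv.swap_mul_eq_mul_swap]
    have hi : π⁻¹ = π := inv_eq_of_mul_eq_one_left h
    rw [hi]
    rcases hs with ⟨h1, h2⟩ | ⟨h1, h2⟩
    · rw [h1, h2, Equiv.swap_comm]
    · rw [h1, h2]
  calc _ = (Equiv.swap a b * π) * (π * Equiv.swap a b) := by rw [← hc]
    _ = Equiv.swap a b * (π * π) * Equiv.swap a b := by group
    _ = 1 := by rw [h]; simp

lemma invT_swap {α : Type} [DecidableEq α] (a b : α) :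
    Nat.card {π : Equiv.Perm α // π * π = 1 ∧ π a = b} =
    Nat.card (InvT {x : α // x ≠ a ∧ x ≠ b}) := by
  rw [← invT_sub]
  refine Nat.card_congr ((Equiv.mulLeft (Equiv.swap a b)).subtypeEquiv ?_)
  intro π
  simp only [Equiv.coe_mulLeft]
  constructor
  · rintro ⟨h, h1⟩
    have h2 : π b = a := by rw [← h1, ← Equiv.Perm.mul_apply, h]; rfl
    refine ⟨inv_swap a b π h (Or.inl ⟨h1, h2⟩), ?_⟩
    intro x hx
    by_cases hxa : x = a
    · subst hxa; simp [h1]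
    · have : x = b := by tauto
      subst this; simp [h2]
  · rintro ⟨h, h1⟩
    have ha := h1 a (by simp)
    have hb := h1 b (by simp)
    have := inv_swap a b _ h (Or.inr ⟨ha, hb⟩)
    rw [Equiv.swap_mul_self_mul] at this
    refine ⟨this, ?_⟩
    rw [Equiv.Perm.mul_apply, Equiv.swap_apply_eq_iff] at ha
    simpa using ha

lemma card_inv_eq (n : ℕ) : (involutions n).card = Nat.card (InvT (Fin n)) := by
  rw [Nat.card_eq_fintype_card, Fintype.card_subtype]; rfl

lemma invT_card {α β : Type} [Fintype α] [Fintype β] (h : Fintype.card α = Fintype.card β) :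
    Nat.card (InvT α) = Nat.card (InvT β) := invT_congr (Fintype.equivOfCardEq h)

lemma card_inv_rec (n : ℕ) : (involutions (n+2)).card =
    (involutions (n+1)).card + (n+1) * (involutions n).card := by
  have hfib : (involutions (n+2)).card =
      ∑ b : Fin (n+2), Nat.card {π : Equiv.Perm (Fin (n+2)) // π * π = 1 ∧ π 0 = b} := by
    rw [Finset.card_eq_sum_card_fiberwise (f := fun π => π 0) (t := Finset.univ) (by simp)]
    refine Finset.sum_congr rfl fun b _ => ?_
    rw [Nat.card_eq_fintype_card, Fintype.card_subtype, involutions, Finset.filter_filter]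
  rw [hfib, Fin.sum_univ_succ]
  congr 1
  · rw [invT_swap, card_inv_eq]
    apply invT_card
    simp [Fintype.card_subtype_compl]
  · rw [Finset.sum_congr rfl (g := fun _ => (involutions n).card)]
    · simp
    · intro b _
      rw [invT_swap, card_inv_eq]
      apply invT_card
      rw [Fintype.card_subtype]
      have : (Finset.univ.filter fun x : Fin (n+2) => x ≠ 0 ∧ x ≠ b.succ) =
          ({0, b.succ} : Finset (Fin (n+2)))ᶜ := by ext; simp
      rw [this, Finset.card_compl, Finset.card_pair (Fin.succ_ne_zero b).symm]
      simp

lemma sum_eq_all (n : ℕ) : ∑ l ∈ invL n, invW l = (involutions n).card := by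
  induction n using Nat.strong_induction_on with
  | _ n ih =>
    match n with
    | 0 => decide
    | 1 => decide
    | n + 2 => rw [sum_invL, card_inv_rec, ih (n+1) (by omega), ih n (by omega)]

/-- `Σ_{(a_1,…,a_m) ∈ C_{≤2}(n)} Π_{i : a_i = 2} (1 + a_1 + ⋯ + a_{i-1}) = i_n`,
the number of involutions of `S_n`. -/
theorem sum_comps_prod_eq_card_involutions (n : ℕ) (hn : 1 ≤ n) :
    ∑ c ∈ compsLe2 n, ∏ i ∈ Finset.range c.blocks.length,
        (if c.blocks.getD i 0 = 2 then 1 + (c.blocks.take i).sum else 1) =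
      (involutions n).card :=
  (sum_comps_eq n).trans (sum_eq_all n)
end

section
/- For every integer n ≥ 1, Σ_{(a_1,…,a_m) ∈ C_{≤2}(n)} Π_{i : a_i = 2} (1 + a_1 + ⋯ + a_{i−1})² = n!, where the sum is over all compositions of n with parts in {1,2} and the product is over the indices i whose part a_i equals 2 (an empty product equals 1). -/
open Finset

/-- Lists with entries 1, 2 and sum `n`, built by appending the last part. -/
def lists12 : ℕ → Finset (List ℕ)
  | 0 => {[]}
  | 1 => {[1]}
  | (n+2) => (lists12 (n+1)).image (fun l => l ++ [1]) ∪ (lists12 n).image (fun l => l ++ [2])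

/-- The weight of a list. -/
def wt12 (l : List ℕ) : ℕ := ∏ i ∈ Finset.range l.length,
        (if l.getD i 0 = 2 then (1 + (l.take i).sum) ^ 2 else 1)

lemma wt12_append (l : List ℕ) (a : ℕ) :
    wt12 (l ++ [a]) = wt12 l * (if a = 2 then (1 + l.sum) ^ 2 else 1) := by
  unfold wt12
  rw [List.length_append, List.length_singleton, Finset.prod_range_succ]
  congr 1
  · apply Finset.prod_congr rfl
    intro i hi
    have hi := Finset.mem_range.1 hi
    rw [List.getD_append _ _ _ _ hi, List.take_append_of_le_length hi.le]
  · rw [List.getD_append_right _ _ _ _ le_rfl]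
    simp

lemma mem_lists12 (n : ℕ) : ∀ l : List ℕ,
    l ∈ lists12 n ↔ l.sum = n ∧ ∀ a ∈ l, a = 1 ∨ a = 2 := by
  induction n using Nat.strong_induction_on with
  | _ n ih =>
    intro l
    match n, ih with
    | 0, _ =>
      rcases l with _ | ⟨a, l⟩
      · simp [lists12]
      · simp [lists12]
        omega
    | 1, _ =>
      simp only [lists12, Finset.mem_singleton]
      constructor
      · rintro rfl; simp
      · rintro ⟨h1, h2⟩
        rcases l with _ | ⟨a, _ | ⟨b, l⟩⟩
        · simp at h1
        · simpa using h1
        · simp at h1 h2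
          omega
    | n+2, ih =>
      have i1 := ih (n+1) (by omega)
      have i0 := ih n (by omega)
      simp only [lists12, Finset.mem_union, Finset.mem_image]
      constructor
      · rintro (⟨m, hm, rfl⟩ | ⟨m, hm, rfl⟩)
        · obtain ⟨h1, h2⟩ := (i1 m).1 hm
          refine ⟨by simp [h1], fun a ha => ?_⟩
          rcases List.mem_append.1 ha with h | h
          · exact h2 a h
          · simp at h; exact Or.inl h
        · obtain ⟨h1, h2⟩ := (i0 m).1 hm
          refine ⟨by simp [h1], fun a ha => ?_⟩
          rcases List.mem_append.1 ha with h | h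
          · exact h2 a h
          · simp at h; exact Or.inr h
      · rintro ⟨h1, h2⟩
        rcases List.eq_nil_or_concat l with rfl | ⟨m, b, rfl⟩
        · simp at h1
        · simp only [List.concat_eq_append] at *
          have hm : ∀ a ∈ m, a = 1 ∨ a = 2 := fun a ha => h2 a (by simp [ha])
          rcases h2 b (by simp) with rfl | rfl
          · exact Or.inl ⟨m, (i1 m).2 ⟨by simp at h1; omega, hm⟩, rfl⟩
          · exact Or.inr ⟨m, (i0 m).2 ⟨by simp at h1; omega, hm⟩, rfl⟩

lemma sum_lists12_succ (n : ℕ) : ∑ l ∈ lists12 (n+2), wt12 l =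
    ∑ l ∈ lists12 (n+1), wt12 l + (n+1)^2 * ∑ l ∈ lists12 n, wt12 l := by
  rw [lists12, Finset.sum_union, Finset.sum_image, Finset.sum_image, Finset.mul_sum]
  · congr 1
    · exact Finset.sum_congr rfl fun l _ => by simp [wt12_append]
    · refine Finset.sum_congr rfl fun l hl => ?_
      rw [wt12_append, ((mem_lists12 n l).1 hl).1]
      simp; ring
  · intro a _ b _ h; simpa using h
  · intro a _ b _ h; simpa using h
  · rw [Finset.disjoint_left]
    intro a ha hb
    obtain ⟨x, -, rfl⟩ := Finset.mem_image.1 ha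
    obtain ⟨y, -, h⟩ := Finset.mem_image.1 hb
    have := congrArg List.getLast? h
    simp at this

lemma sum_lists12 (n : ℕ) : ∑ l ∈ lists12 n, wt12 l = Nat.factorial n := by
  induction n using Nat.twoStepInduction with
  | zero => simp [lists12, wt12]
  | one => simp [lists12, wt12]
  | more n h0 h1 =>
    rw [sum_lists12_succ, h0, h1, Nat.factorial_succ (n+1), Nat.factorial_succ n]
    ring

/-- `Σ_{(a_1,…,a_m) ∈ C_{≤2}(n)} Π_{i : a_i = 2} (1 + a_1 + ⋯ + a_{i-1})² = n!`. -/
theorem sum_comps_prod_sq_eq_factorial (n : ℕ) (hn : 1 ≤ n) :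
    ∑ c ∈ compsLe2 n, ∏ i ∈ Finset.range c.blocks.length,
        (if c.blocks.getD i 0 = 2 then (1 + (c.blocks.take i).sum) ^ 2 else 1) =
      Nat.factorial n := by
  rw [← sum_lists12 n]
  refine Finset.sum_bij (fun c _ => c.blocks) ?_ ?_ ?_ ?_
  · intro c hc
    exact (mem_lists12 n _).2 ⟨c.blocks_sum, (Finset.mem_filter.1 hc).2⟩
  · intro a _ b _ h
    exact Composition.ext h
  · intro l hl
    obtain ⟨h1, h2⟩ := (mem_lists12 n l).1 hl
    refine ⟨⟨l, fun {i} hi => ?_, h1⟩, ?_, rfl⟩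
    · rcases h2 i hi with h | h <;> omega
    · exact Finset.mem_filter.2 ⟨Finset.mem_univ _, h2⟩
  · intro c _
    rfl
end

section
/- For every integer n ≥ 0, (1/(n+2)) · Σ_{(a_1,…,a_m) ∈ C_{≤2}(n)} Π_{i : a_i = 2} 1/(a_1 + ⋯ + a_i) = Σ_{k=0}^{n+2} (−1)^k / k!, where the sum is over all compositions of n with parts in {1,2} and the product is over the indices i whose part a_i equals 2 (an empty product equals 1). -/
open Finset

/-- Weight of a list. -/
noncomputable def auxW (l : List ℕ) : ℝ :=
  ∏ i ∈ Finset.range l.length,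
        (if l.getD i 0 = 2 then (((l.take (i + 1)).sum : ℝ))⁻¹ else 1)

lemma auxW_concat (l : List ℕ) (a : ℕ) :
    auxW (l ++ [a]) = auxW l * (if a = 2 then (((l.sum + a : ℕ) : ℝ))⁻¹ else 1) := by
  unfold auxW
  rw [List.length_append, List.length_singleton, Finset.prod_range_succ]
  congr 1
  · apply Finset.prod_congr rfl
    intro i hi
    have hi' := Finset.mem_range.mp hi
    rw [List.getD_append _ _ _ _ hi', List.take_append_of_le_length (by omega)]
  · have h1 : (l ++ [a]).getD l.length 0 = a := by simp
    have h2 : (l ++ [a]).take (l.length + 1) = l ++ [a] :=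
      List.take_of_length_le (by simp)
    rw [h1, h2, List.sum_append, List.sum_singleton]

/-- Lists of 1 and 2 with sum n. -/
def auxL : ℕ → Finset (List ℕ)
  | 0 => {[]}
  | 1 => {[1]}
  | (n + 2) => (auxL (n + 1)).image (fun l => l ++ [1]) ∪ (auxL n).image (fun l => l ++ [2])

lemma mem_auxL : ∀ (n : ℕ) (l : List ℕ),
    l ∈ auxL n ↔ (∀ a ∈ l, a = 1 ∨ a = 2) ∧ l.sum = n
  | 0, l => by
    rcases l with _ | ⟨a, l⟩
    · simp [auxL]
    · simp only [auxL, Finset.mem_singleton, List.sum_cons, List.mem_cons]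
      constructor
      · simp
      · rintro ⟨h, h'⟩
        have := h a (Or.inl rfl)
        omega
  | 1, l => by
    rcases l with _ | ⟨a, _ | ⟨b, l⟩⟩
    · simp [auxL]
    · simp [auxL]
      omega
    · simp only [auxL, Finset.mem_singleton, List.sum_cons, List.mem_cons]
      constructor
      · simp
      · rintro ⟨h, h'⟩
        have := h a (Or.inl rfl)
        have := h b (Or.inr (Or.inl rfl))
        omega
  | (n + 2), l => by
    simp only [auxL, Finset.mem_union, Finset.mem_image, mem_auxL (n + 1), mem_auxL n]
    constructor
    · rintro (⟨l, ⟨h, h'⟩, rfl⟩ | ⟨l, ⟨h, h'⟩, rfl⟩)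
      · refine ⟨?_, by simp [h']⟩
        intro a ha
        rcases List.mem_append.mp ha with h1 | h1
        · exact h a h1
        · left; simpa using h1
      · refine ⟨?_, by simp [h']⟩
        intro a ha
        rcases List.mem_append.mp ha with h1 | h1
        · exact h a h1
        · right; simpa using h1
    · rintro ⟨h, h'⟩
      rcases List.eq_nil_or_concat l with rfl | ⟨l, a, rfl⟩
      · simp at h'
      · simp only [List.concat_eq_append, List.sum_append, List.sum_singleton] at h h' ⊢
        have hl : ∀ b ∈ l, b = 1 ∨ b = 2 := fun b hb => h b (by simp [hb])
        rcases h a (by simp) with rfl | rfl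
        · exact Or.inl ⟨l, ⟨hl, by omega⟩, rfl⟩
        · exact Or.inr ⟨l, ⟨hl, by omega⟩, rfl⟩

lemma sum_auxL_rec (n : ℕ) :
    ∑ l ∈ auxL (n + 2), auxW l =
      ∑ l ∈ auxL (n + 1), auxW l + (∑ l ∈ auxL n, auxW l) * ((n : ℝ) + 2)⁻¹ := by
  rw [auxL, Finset.sum_union, Finset.sum_image, Finset.sum_image, Finset.sum_mul]
  · congr 1
    · apply Finset.sum_congr rfl
      intro l _
      rw [auxW_concat]; simp
    · apply Finset.sum_congr rfl
      intro l hl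
      rw [auxW_concat, ((mem_auxL n l).mp hl).2]; simp
  · intro a _ b _ h; simpa using h
  · intro a _ b _ h; simpa using h
  · rw [Finset.disjoint_left]
    intro l h1 h2
    obtain ⟨a, _, rfl⟩ := Finset.mem_image.mp h1
    obtain ⟨b, _, h⟩ := Finset.mem_image.mp h2
    have := List.append_inj_right' h rfl
    simp at this

lemma sum_auxL : ∀ n : ℕ, ∑ l ∈ auxL n, auxW l =
    ((n : ℝ) + 2) * ∑ k ∈ Finset.range (n + 3), (-1 : ℝ) ^ k / (Nat.factorial k : ℝ)
  | 0 => by simp [auxL, auxW, Finset.sum_range_succ]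
  | 1 => by simp [auxL, auxW, Finset.sum_range_succ, Nat.factorial]; norm_num
  | (n + 2) => by
    rw [sum_auxL_rec, sum_auxL (n + 1), sum_auxL n]
    rw [Finset.sum_range_succ _ (n + 4), Finset.sum_range_succ _ (n + 3)]
    have hn : (n : ℝ) + 2 ≠ 0 := by positivity
    have h4 : (n : ℝ) + 4 ≠ 0 := by positivity
    have hf : ((n + 3).factorial : ℝ) ≠ 0 := by positivity
    have : ((n + 4).factorial : ℝ) = ((n : ℝ) + 4) * ((n + 3).factorial : ℝ) := by
      rw [Nat.factorial_succ (n + 3)]; push_cast; ring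
    rw [this]
    generalize ∑ k ∈ Finset.range (n + 3), (-1 : ℝ) ^ k / (Nat.factorial k : ℝ) = S
    push_cast
    field_simp
    ring

/-- `(1/(n+2)) Σ_{(a_1,…,a_m) ∈ C_{≤2}(n)} Π_{i : a_i = 2} 1/(a_1 + ⋯ + a_i)
  = Σ_{k=0}^{n+2} (-1)^k / k!`. -/
theorem sum_comps_prod_inv_eq_der_sum (n : ℕ) :
    (((n : ℝ) + 2)⁻¹) * ∑ c ∈ compsLe2 n, ∏ i ∈ Finset.range c.blocks.length,
        (if c.blocks.getD i 0 = 2 then (((c.blocks.take (i + 1)).sum : ℝ))⁻¹ else 1) =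
      ∑ k ∈ Finset.range (n + 3), (-1 : ℝ) ^ k / (Nat.factorial k : ℝ) := by
  have key : ∑ c ∈ compsLe2 n, auxW c.blocks = ∑ l ∈ auxL n, auxW l := by
    apply Finset.sum_nbij (fun c => c.blocks)
    · intro c hc
      rw [mem_auxL]
      exact ⟨(Finset.mem_filter.mp hc).2, c.blocks_sum⟩
    · intro a _ b _ h
      exact Composition.ext h
    · intro l hl
      have hl' := (mem_auxL n l).mp (Finset.mem_coe.mp hl)
      refine ⟨⟨l, ?_, hl'.2⟩, ?_, rfl⟩
      · intro i hi
        rcases hl'.1 i hi with h | h <;> omega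
      · exact Finset.mem_coe.mpr (Finset.mem_filter.mpr ⟨Finset.mem_univ _, hl'.1⟩)
    · intro _ _; rfl
  have hn : (n : ℝ) + 2 ≠ 0 := by positivity
  change (((n : ℝ) + 2)⁻¹) * ∑ c ∈ compsLe2 n, auxW c.blocks = _
  rw [key, sum_auxL, inv_mul_cancel_left₀ hn]
end

section
/- For all integers n ≥ 2 and k ≥ 0, the numbers D_{n,k} of derangements of {1,…,n} with exactly k descents satisfy D_{n,k} = (k+1)·D_{n−1,k} + (n−k−1)·D_{n−1,k−1} + k·D_{n−2,k−1} + (n−k)·D_{n−2,k−2}, with the conventions D_{0,0} = 1, D_{m,k} = 0 whenever k < 0, and D_{m,k} = 0 when there is no derangement of {1,…,m} with k descents. -/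
open Finset

/-- The derangements of the symmetric group `S_n`. -/
def derangementSet (n : ℕ) : Finset (Equiv.Perm (Fin n)) :=
  Finset.univ.filter fun π => ∀ i, π i ≠ i

/-- `D_{n,k}`: the number of derangements of `{1,…,n}` with exactly `k` descents,
with `D_{n,k} = 0` for `k < 0`. -/
def derDes (n : ℕ) (k : ℤ) : ℕ :=
  ((derangementSet n).filter fun π => (descents π : ℤ) = k).card


def bal {α : Type*} [LinearOrder α] (c : α) (a b : List α) : Prop :=
  a.countP (fun x => decide (c < x)) = b.countP (fun x => decide (x < c))

def LL {α : Type*} [LinearOrder α] (c : α) (w : List α) : Prop :=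
  ∃ a b, w = a ++ c :: b ∧ bal c a b

theorem bal_exists_aux {α : Type*} [LinearOrder α] (c : α) (b : List α) : ∀ a : List α,
    a.countP (fun x => decide (c < x)) ≤ b.countP (fun x => decide (x < c)) →
    ∃ a' b', a ++ b = a' ++ b' ∧ bal c a' b' := by
  induction b with
  | nil => intro a h; exact ⟨a, [], rfl, by simpa [bal] using h⟩
  | cons x b ih =>
    intro a h
    by_cases he : bal c a (x :: b)
    · exact ⟨a, _, rfl, he⟩
    · unfold bal at he
      have := ih (a ++ [x]) (by
        simp only [List.countP_append, List.countP_cons, List.countP_nil, decide_eq_true_eq] at *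
        rcases lt_trichotomy x c with hx | hx | hx
        · rw [if_pos hx] at h he
          rw [if_neg hx.not_gt]
          omega
        · subst hx; simp_all
        · rw [if_neg hx.not_gt] at h he
          rw [if_pos hx]
          omega)
      simpa using this

theorem bal_exists {α : Type*} [LinearOrder α] (c : α) (u : List α) :
    ∃ a b, u = a ++ b ∧ bal c a b := by
  simpa using bal_exists_aux c u [] (by simp)

theorem mid_eq {α : Type*} [LinearOrder α] (c : α) (e : List α)
    (h1 : e.countP (fun x => decide (c < x)) = 0) (h2 : e.countP (fun x => decide (x < c)) = 0) :
    c :: e = e ++ [c] := by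
  have : e = List.replicate e.length c := by
    rw [List.eq_replicate_iff]
    refine ⟨rfl, fun b hb => ?_⟩
    rw [List.countP_eq_zero] at h1 h2
    have := h1 b hb
    have := h2 b hb
    simp at *
    order
  rw [this, ← List.replicate_succ, List.replicate_succ']

theorem bal_unique_aux {α : Type*} [LinearOrder α] (c : α) (a e b' : List α)
    (h : bal c a (e ++ b')) (h' : bal c (a ++ e) b') :
    a ++ c :: (e ++ b') = a ++ e ++ c :: b' := by
  simp only [bal, List.countP_append] at h h'
  have := mid_eq c e (by omega) (by omega)
  rw [← List.cons_append, this]; simp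

theorem bal_unique {α : Type*} [LinearOrder α] (c : α) (a b a' b' : List α)
    (h : bal c a b) (h' : bal c a' b') (he : a ++ b = a' ++ b') :
    a ++ c :: b = a' ++ c :: b' := by
  rw [List.append_eq_append_iff] at he
  rcases he with ⟨e, rfl, rfl⟩ | ⟨e, rfl, rfl⟩
  · exact bal_unique_aux c a e b' h h'
  · exact (bal_unique_aux c a' e b h' h).symm

theorem bal_unique2_aux {α : Type*} [LinearOrder α] (c : α) (a e b b' : List α)
    (h : bal c a b) (h' : bal c (a ++ e) b') (he : c :: b = e ++ c :: b') :
    a ++ b = a ++ e ++ b' := by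
  cases e with
  | nil => simp_all
  | cons x e =>
    simp at he
    obtain ⟨rfl, rfl⟩ := he
    simp [bal, List.countP_append] at h h'
    have := mid_eq c e (by omega) (by omega)
    simp only [List.append_assoc]
    rw [this]; simp

theorem bal_unique2 {α : Type*} [LinearOrder α] (c : α) (a b a' b' : List α)
    (h : bal c a b) (h' : bal c a' b') (he : a ++ c :: b = a' ++ c :: b') :
    a ++ b = a' ++ b' := by
  rw [List.append_eq_append_iff] at he
  rcases he with ⟨e, rfl, h2⟩ | ⟨e, rfl, h2⟩
  · exact bal_unique2_aux c a e b b' h h' h2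
  · exact (bal_unique2_aux c a' e b' b h' h h2).symm

theorem gt_mono {α : Type*} [LinearOrder α] {c d : α} (h : c < d) (l : List α) :
    l.countP (fun x => decide (d < x)) ≤ l.countP (fun x => decide (c < x)) := by
  apply List.countP_mono_left
  intro x _ hx
  simp at *
  order

theorem lt_mono' {α : Type*} [LinearOrder α] {c d : α} (h : c < d) (l : List α) :
    l.countP (fun x => decide (x < c)) ≤ l.countP (fun x => decide (x < d)) := by
  apply List.countP_mono_left
  intro x _ hx
  simp at *
  order

theorem LL_pres1 {α : Type*} [LinearOrder α] (c d : α) (hcd : d ≠ c) (a b : List α)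
    (h : bal c a b) (hd : LL d (a ++ b)) : LL d (a ++ c :: b) := by
  obtain ⟨p, q, he, hq⟩ := hd
  rw [List.append_eq_append_iff] at he
  -- d at or after the cut
  have key1 : ∀ e, p = a ++ e → b = e ++ d :: q → LL d (a ++ c :: b) := by
    rintro e rfl rfl
    refine ⟨a ++ c :: e, q, by simp, ?_⟩
    unfold bal at *
    simp only [List.countP_append, List.countP_cons, decide_eq_true_eq] at *
    rcases lt_or_gt_of_ne hcd with h1 | h1
    · exfalso
      have := gt_mono h1 a
      have := lt_mono' h1 q
      simp [h1] at h
      omega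
    · simp [h1.not_gt]; omega
  have key2 : ∀ e, a = p ++ d :: e → q = e ++ b → LL d (a ++ c :: b) := by
    rintro e rfl rfl
    refine ⟨p, e ++ c :: b, by simp, ?_⟩
    unfold bal at *
    simp only [List.countP_append, List.countP_cons, decide_eq_true_eq] at *
    rcases lt_or_gt_of_ne hcd with h1 | h1
    · simp [h1.not_gt]; omega
    · exfalso
      have := gt_mono h1 p
      have := lt_mono' h1 b
      simp [h1] at h
      omega
  rcases he with ⟨e, h1, h2⟩ | ⟨e, h1, h2⟩
  · exact key1 e h1 h2
  · cases e with
    | nil => exact key1 [] (by simpa using h1.symm) (by simpa using h2.symm)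
    | cons x e =>
      simp at h2
      obtain ⟨rfl, rfl⟩ := h2
      exact key2 e h1 rfl

theorem LL_pres2 {α : Type*} [LinearOrder α] (c d : α) (hcd : d ≠ c) (a b : List α)
    (h : bal c a b) (hd : LL d (a ++ c :: b)) : LL d (a ++ b) := by
  obtain ⟨p, q, he, hq⟩ := hd
  rw [List.append_eq_append_iff] at he
  rcases he with ⟨e, h1, h2⟩ | ⟨e, h1, h2⟩
  · cases e with
    | nil => simp at h2; exact absurd h2.1.symm hcd
    | cons x e =>
      simp at h2
      obtain ⟨rfl, rfl⟩ := h2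
      subst h1
      refine ⟨a ++ e, q, by simp, ?_⟩
      unfold bal at *
      simp only [List.countP_append, List.countP_cons, decide_eq_true_eq] at *
      rcases lt_or_gt_of_ne hcd with h1 | h1
      · exfalso
        have := gt_mono h1 a
        have := lt_mono' h1 q
        simp [h1] at h hq
        omega
      · simp [h1.not_gt] at hq; omega
  · cases e with
    | nil => simp at h2; exact absurd h2.1 hcd
    | cons x e =>
      simp at h2
      obtain ⟨rfl, rfl⟩ := h2
      subst h1
      refine ⟨p, e ++ b, by simp, ?_⟩
      unfold bal at *
      simp only [List.countP_append, List.countP_cons, decide_eq_true_eq] at *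
      rcases lt_or_gt_of_ne hcd with h1 | h1
      · simp [h1.not_gt] at hq; omega
      · exfalso
        have := gt_mono h1 p
        have := lt_mono' h1 b
        simp [h1] at h hq
        omega

noncomputable def HH (M n : ℕ) (T : Finset (Fin M)) : ℕ :=
  Set.ncard {l : List (Fin M) | l.length = n ∧ ∀ d ∈ T, ¬ LL d l}

theorem HH_step (M n : ℕ) (T : Finset (Fin M)) (c : Fin M) (hc : c ∉ T) :
    HH M (n+1) (insert c T) + HH M n T = HH M (n+1) T := by
  choose A B hAB hbal using bal_exists c
  have hbij : HH M n T = Set.ncard {l : List (Fin M) | (l.length = n+1 ∧ ∀ d ∈ T, ¬ LL d l) ∧ LL c l} := by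
    unfold HH
    rw [← Set.InjOn.ncard_image (f := fun u => A u ++ c :: B u)]
    · congr 1
      ext w
      simp only [Set.mem_image, Set.mem_ofPred_eq]
      constructor
      · rintro ⟨u, ⟨hu, hT⟩, rfl⟩
        refine ⟨⟨?_, ?_⟩, _, _, rfl, hbal u⟩
        · rw [hAB u] at hu; simp at hu ⊢; omega
        · intro d hd hL
          have := LL_pres2 c d (by rintro rfl; exact hc hd) _ _ (hbal u) hL
          rw [← hAB] at this
          exact hT d hd this
      · rintro ⟨⟨hl, hT⟩, a, b, rfl, hb⟩
        refine ⟨a ++ b, ⟨?_, ?_⟩, ?_⟩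
        · simp at hl ⊢; omega
        · intro d hd hL
          exact hT d hd (LL_pres1 c d (by rintro rfl; exact hc hd) _ _ hb hL)
        · exact bal_unique c _ _ _ _ (hbal _) hb (hAB _).symm
    · intro u _ v _ huv
      have := bal_unique2 c _ _ _ _ (hbal u) (hbal v) huv
      rwa [← hAB, ← hAB] at this
  rw [hbij]
  unfold HH
  rw [← Set.ncard_union_eq ?_ ?_ ?_]
  · congr 1
    ext l
    simp
    tauto
  · rw [Set.disjoint_left]
    intro l h1 h2
    exact h1.2 c (by simp) h2.2
  · exact (List.finite_length_eq (Fin M) (n+1)).subset (fun l h => h.1)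
  · exact (List.finite_length_eq (Fin M) (n+1)).subset (fun l h => h.1.1)

theorem HH_empty (M n : ℕ) : HH M n ∅ = M ^ n := by
  unfold HH
  have := card_vector (α := Fin M) n
  rw [Fintype.card_fin] at this
  rw [← this, ← Nat.card_eq_fintype_card, ← Nat.card_coe_set_eq]
  apply Nat.card_congr
  exact Equiv.subtypeEquivRight (fun l => by simp)

theorem HH_zero (M : ℕ) (T : Finset (Fin M)) : HH M 0 T = 1 := by
  unfold HH
  rw [Set.ncard_eq_one]
  refine ⟨[], ?_⟩
  ext l
  simp only [Set.mem_ofPred_eq, Set.mem_singleton_iff, List.length_eq_zero_iff]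
  constructor
  · exact fun h => h.1
  · rintro rfl
    refine ⟨rfl, ?_⟩
    rintro d _ ⟨a, b, h, _⟩
    simp at h

theorem HH_rec (M : ℕ) (T : Finset (Fin M)) : ∀ n,
    (HH M (n+1) T : ℤ) = M * HH M n T + (-1)^(n+1) * (T.card.choose (n+1) : ℤ) := by
  induction T using Finset.induction_on with
  | empty => intro n; simp [HH_empty]; ring
  | insert c T hc ih =>
    intro n
    have h1 := HH_step M n T c hc
    zify at h1
    rw [Finset.card_insert_of_notMem hc, Nat.choose_succ_succ]
    rw [eq_sub_of_add_eq h1, ih n]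
    cases n with
    | zero => simp [HH_zero]; ring
    | succ n =>
      have h2 := HH_step M n T c hc
      zify at h2
      rw [eq_sub_of_add_eq h2, ih n]
      push_cast
      ring

theorem countP_take_ofFn {α : Type*} {n : ℕ} (w : Fin n → α) (p : α → Bool) (i : ℕ) (hi : i ≤ n) :
    ((List.ofFn w).take i).countP p
      = (univ.filter fun j : Fin n => (j : ℕ) < i ∧ p (w j) = true).card := by
  induction i with
  | zero => simp
  | succ i ih =>
    rw [List.take_succ_eq_append_getElem (by simpa using hi), List.countP_append, ih (by omega)]
    have : (univ.filter fun j : Fin n => (j : ℕ) < i + 1 ∧ p (w j) = true)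
      = (univ.filter fun j : Fin n => (j : ℕ) < i ∧ p (w j) = true) ∪
        (univ.filter fun j : Fin n => j = ⟨i, hi⟩ ∧ p (w j) = true) := by
      ext j
      simp only [mem_filter, mem_univ, true_and, mem_union, Fin.ext_iff]
      have : (j : ℕ) < i + 1 ↔ (j : ℕ) < i ∨ (j : ℕ) = i := by omega
      rw [this]; tauto
    rw [this, card_union_of_disjoint]
    · congr 1
      rw [← Finset.filter_filter, Finset.filter_eq' univ, if_pos (mem_univ _), Finset.filter_singleton]
      simp [List.countP_singleton]
      split_ifs <;> simp
    · rw [Finset.disjoint_left]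
      intro j
      simp only [mem_filter, mem_univ, true_and, Fin.ext_iff]
      omega

theorem countP_drop_ofFn {α : Type*} {n : ℕ} (w : Fin n → α) (p : α → Bool) (i : ℕ) (hi : i < n) :
    ((List.ofFn w).drop (i+1)).countP p
      = (univ.filter fun j : Fin n => i < (j : ℕ) ∧ p (w j) = true).card := by
  have h1 := countP_take_ofFn w p (i+1) hi
  have h2 := countP_take_ofFn w p n le_rfl
  have h3 : (List.ofFn w).countP p = ((List.ofFn w).take (i+1)).countP p
    + ((List.ofFn w).drop (i+1)).countP p := by
    rw [← List.countP_append, List.take_append_drop]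
  rw [List.take_of_length_le (by simp)] at h2
  have h4 : (univ.filter fun j : Fin n => (j : ℕ) < n ∧ p (w j) = true).card
    = (univ.filter fun j : Fin n => (j : ℕ) < i + 1 ∧ p (w j) = true).card
    + (univ.filter fun j : Fin n => i < (j : ℕ) ∧ p (w j) = true).card := by
    rw [← card_union_of_disjoint]
    · congr 1
      ext j
      simp only [mem_filter, mem_univ, true_and, mem_union]
      have := j.2
      have : (j : ℕ) < i + 1 ∨ i < (j : ℕ) := by omega
      tauto
    · rw [Finset.disjoint_left]
      intro j
      simp only [mem_filter, mem_univ, true_and]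
      omega
  omega

theorem LL_ofFn {α : Type*} [LinearOrder α] {n : ℕ} (w : Fin n → α) (c : α) :
    LL c (List.ofFn w) ↔ ∃ i, w i = c ∧
      (univ.filter fun j : Fin n => j < i ∧ w i < w j).card
       = (univ.filter fun j : Fin n => i < j ∧ w j < w i).card := by
  have aux : ∀ i : Fin n, bal (w i) ((List.ofFn w).take i) ((List.ofFn w).drop (i+1)) ↔
      (univ.filter fun j : Fin n => j < i ∧ w i < w j).card
       = (univ.filter fun j : Fin n => i < j ∧ w j < w i).card := by
    intro i
    unfold bal
    rw [countP_take_ofFn _ _ _ i.2.le, countP_drop_ofFn _ _ _ i.2]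
    simp only [decide_eq_true_eq, Fin.lt_def]
  constructor
  · rintro ⟨a, b, h, hb⟩
    have hlen : a.length < n := by
      have := congrArg List.length h
      simp at this; omega
    have hc : w ⟨a.length, hlen⟩ = c := by
      have : (List.ofFn w)[a.length]'(by simpa using hlen) = c := by
        simp [h]
      simpa using this
    refine ⟨⟨a.length, hlen⟩, hc, (aux _).1 ?_⟩
    rw [hc, h]
    simpa using hb
  · rintro ⟨i, rfl, h⟩
    refine ⟨(List.ofFn w).take i, (List.ofFn w).drop (i+1), ?_, (aux i).2 h⟩
    have : w i = (List.ofFn w)[(i : ℕ)]'(by simp) := by simp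
    rw [this, List.getElem_cons_drop, List.take_append_drop]

theorem sort_lt_iff {α : Type*} [LinearOrder α] {n : ℕ} (w : Fin n → α) (a b : Fin n) :
    a < b ↔ w (Tuple.sort w a) < w (Tuple.sort w b) ∨
      (w (Tuple.sort w a) = w (Tuple.sort w b) ∧ Tuple.sort w a < Tuple.sort w b) := by
  obtain ⟨h1, h2⟩ := (Tuple.eq_sort_iff (f := w) (σ := Tuple.sort w)).1 rfl
  have key : ∀ a b, a < b → w (Tuple.sort w a) < w (Tuple.sort w b) ∨
      (w (Tuple.sort w a) = w (Tuple.sort w b) ∧ Tuple.sort w a < Tuple.sort w b) := by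
    intro a b h
    rcases (h1 h.le).lt_or_eq with h3 | h3
    · exact Or.inl h3
    · exact Or.inr ⟨h3, h2 a b h h3⟩
  refine ⟨key a b, fun h => ?_⟩
  by_contra hn
  rcases (not_lt.1 hn).lt_or_eq with h3 | h3
  · rcases key b a h3 with h4 | h4 <;> rcases h with h5 | h5
    · order
    · order
    · order
    · exact absurd h4.2 h5.2.not_gt
  · subst h3; simp at h

theorem sort_fix_iff {α : Type*} [LinearOrder α] {n : ℕ} (w : Fin n → α) (i : Fin n) :
    Tuple.sort w i = i ↔
      (univ.filter fun j : Fin n => j < i ∧ w i < w j).card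
       = (univ.filter fun j : Fin n => i < j ∧ w j < w i).card := by
  set π := Tuple.sort w with hπ
  have h1 : ((π.symm i : Fin n) : ℕ) =
      (univ.filter fun j : Fin n => w j < w i ∨ (w j = w i ∧ j < i)).card := by
    rw [← Fin.card_Iio (π.symm i)]
    apply Finset.card_bij (fun a _ => π a)
    · intro a ha
      rw [mem_Iio, sort_lt_iff w, ← hπ] at ha
      simpa using ha
    · intro a _ b _ h; exact π.injective h
    · intro j hj
      refine ⟨π.symm j, ?_, by simp⟩
      rw [mem_Iio, sort_lt_iff w, ← hπ]
      simpa using hj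
  have h2 := Fin.card_Iio i
  have e1 : (Finset.Iio i) = (univ.filter fun j : Fin n => j < i ∧ w i < w j) ∪
     (univ.filter fun j : Fin n => j < i ∧ w j ≤ w i) := by
    ext j
    simp only [mem_Iio, mem_filter, mem_univ, true_and, mem_union]
    have := lt_or_ge (w i) (w j)
    tauto
  have e2 : (univ.filter fun j : Fin n => w j < w i ∨ (w j = w i ∧ j < i)) =
     (univ.filter fun j : Fin n => i < j ∧ w j < w i) ∪
     (univ.filter fun j : Fin n => j < i ∧ w j ≤ w i) := by
    ext j
    simp only [mem_filter, mem_univ, true_and, mem_union]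
    rw [le_iff_lt_or_eq]
    rcases lt_trichotomy i j with h | h | h
    · have := h.not_gt; tauto
    · subst h; simp
    · have := h.not_gt; tauto
  rw [e1, card_union_of_disjoint] at h2
  · rw [e2, card_union_of_disjoint] at h1
    · have : π i = i ↔ ((π.symm i : Fin n) : ℕ) = i := by
        rw [← Fin.ext_iff, Equiv.symm_apply_eq]; exact eq_comm
      rw [this]; omega
    · rw [Finset.disjoint_left]
      intro j
      simp only [mem_filter, mem_univ, true_and]
      intro h h'; exact absurd h.1 h'.1.not_gt
  · rw [Finset.disjoint_left]
    intro j
    simp only [mem_filter, mem_univ, true_and]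
    intro h h'; exact absurd h.2 h'.2.not_gt

theorem HH_univ (M n : ℕ) : HH M n univ =
    (univ.filter fun w : Fin n → Fin M => Tuple.sort w ∈ derangementSet n).card := by
  unfold HH
  rw [← Set.ncard_coe_finset, ← Set.InjOn.ncard_image (f := List.ofFn)
    (List.ofFn_injective.injOn)]
  congr 1
  have key : ∀ w : Fin n → Fin M, (∀ d, ¬ LL d (List.ofFn w)) ↔ Tuple.sort w ∈ derangementSet n := by
    intro w
    simp only [LL_ofFn, derangementSet, mem_filter, mem_univ, true_and, ne_eq, sort_fix_iff]
    exact ⟨fun h i hi => h (w i) ⟨i, rfl, hi⟩, fun h d ⟨i, _, hi⟩ => h i hi⟩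
  ext l
  simp only [Set.mem_ofPred_eq, Set.mem_image, coe_filter, mem_univ, true_and, true_imp_iff]
  constructor
  · rintro ⟨rfl, h⟩
    refine ⟨l.get, ?_, by simp⟩
    rw [← key]; simpa using h
  · rintro ⟨w, h, rfl⟩
    refine ⟨by simp, (key w).2 h⟩

theorem cnt (N m : ℕ) (Q : Fin N → Prop) [DecidablePred Q] (e : Fin (N+1) → ℕ) (he0 : e 0 = 0)
    (he : ∀ i : Fin N, e i.succ = e i.castSucc + if Q i then 0 else 1) :
    Nat.card {s : Fin (N+1) → Fin (m+1) // ∀ i : Fin N, s i.castSucc ≤ s i.succ ∧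
      (Q i → s i.castSucc < s i.succ)} = (m + 1 + e (Fin.last N)).choose (N+1) := by
  have hem : Monotone e := by
    rw [Fin.monotone_iff_le_succ]; intro i; rw [he]; omega
  rw [show (m + 1 + e (Fin.last N)).choose (N+1)
    = Nat.card (Set.powersetCard (Fin (m + 1 + e (Fin.last N))) (N+1)) by
      rw [Set.powersetCard.card]; simp]
  rw [← Nat.card_congr (Set.powersetCard.ofFinEmbEquiv)]
  have ht : ∀ t : Fin (N+1) ↪o Fin (m + 1 + e (Fin.last N)),
      ∀ i : Fin N, (t i.castSucc : ℕ) < t i.succ := by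
    intro t i
    exact t.strictMono i.castSucc_lt_succ
  have hge : ∀ t : Fin (N+1) ↪o Fin (m + 1 + e (Fin.last N)),
      ∀ i : Fin (N+1), e i ≤ t i := by
    intro t i
    induction i using Fin.induction with
    | zero => omega
    | succ i ih =>
      have := ht t i
      rw [he]; split_ifs <;> omega
  have hmono : ∀ t : Fin (N+1) ↪o Fin (m + 1 + e (Fin.last N)),
      Monotone (fun i => (t i : ℕ) - e i) := by
    intro t
    rw [Fin.monotone_iff_le_succ]
    intro i
    have := ht t i
    have := he i
    have := hge t i.castSucc
    split_ifs at * <;> omega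
  apply Nat.card_congr
  refine ⟨fun s => OrderEmbedding.ofStrictMono (fun i => ⟨s.1 i + e i, ?_⟩) ?_,
    fun t => ⟨fun i => ⟨t i - e i, ?_⟩, ?_⟩, ?_, ?_⟩
  · have := hem (Fin.le_last i)
    have := (s.1 i).2
    omega
  · rw [Fin.strictMono_iff_lt_succ]
    intro i
    have h := s.2 i
    rw [Fin.le_def, Fin.lt_def] at h
    rw [Fin.lt_def]
    simp only
    rw [he]
    split_ifs with hq
    · have := h.2 hq; omega
    · omega
  · have := hmono t (Fin.le_last i)
    have := (t (Fin.last N)).2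
    simp only at *
    omega
  · intro i
    have h1 := hmono t i.castSucc_lt_succ.le
    refine ⟨h1, fun hq => ?_⟩
    rw [Fin.lt_def]
    simp only
    have := ht t i
    have := he i
    have := hge t i.castSucc
    rw [if_pos hq] at *
    omega
  · intro s
    ext i
    simp
  · intro t
    ext i
    have := hge t i
    simp
    omega

theorem sort_eq_iff (N m : ℕ) (π : Equiv.Perm (Fin (N+1))) (w : Fin (N+1) → Fin m) :
    Tuple.sort w = π ↔ ∀ i : Fin N, (w ∘ π) i.castSucc ≤ (w ∘ π) i.succ ∧
      (π i.succ < π i.castSucc → (w ∘ π) i.castSucc < (w ∘ π) i.succ) := by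
  rw [eq_comm, Tuple.eq_sort_iff]
  constructor
  · rintro ⟨h1, h2⟩ i
    refine ⟨h1 i.castSucc_lt_succ.le, fun h => ?_⟩
    refine lt_of_le_of_ne (h1 i.castSucc_lt_succ.le) fun h3 => ?_
    exact absurd (h2 _ _ i.castSucc_lt_succ h3) h.not_gt
  · intro h
    have h1 : Monotone (w ∘ π) := by
      rw [Fin.monotone_iff_le_succ]; exact fun i => (h i).1
    refine ⟨h1, fun i j => ?_⟩
    induction j using Fin.induction with
    | zero => intro h; simp at h
    | succ j ih =>
      intro hij heq
      have hij' : i ≤ j.castSucc := by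
        rw [Fin.lt_def] at hij; rw [Fin.le_def]; simp at *; omega
      have a1 : w (π i) ≤ w (π j.castSucc) := h1 hij'
      have a2 : w (π j.castSucc) ≤ w (π j.succ) := (h j).1
      have a3 : π j.castSucc < π j.succ := by
        by_contra hn
        have : π j.succ < π j.castSucc := by
          refine lt_of_le_of_ne (not_lt.1 hn) fun h => ?_
          exact absurd (π.injective h) j.castSucc_lt_succ.ne'
        have a4 : w (π j.castSucc) < w (π j.succ) := (h j).2 this
        order
      rcases hij'.lt_or_eq with h5 | h5
      · exact (ih h5 (by order)).trans a3
      · rw [h5]; exact a3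

theorem descents_eq (N : ℕ) (π : Equiv.Perm (Fin (N+1))) :
    descents π = (univ.filter fun i : Fin N => π i.succ < π i.castSucc).card := by
  unfold descents
  symm
  apply Finset.card_bij (fun i _ => i.castSucc)
  · intro i hi
    simp only [mem_filter, mem_univ, true_and] at *
    exact ⟨by simp, hi⟩
  · intro a _ b _ h; simpa using h
  · intro b hb
    simp only [mem_filter, mem_univ, true_and] at hb
    obtain ⟨h, hb⟩ := hb
    refine ⟨⟨b, by omega⟩, ?_, rfl⟩
    simp only [mem_filter, mem_univ, true_and]
    exact hb

theorem fiber (N m : ℕ) (π : Equiv.Perm (Fin (N+1))) :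
    (univ.filter fun w : Fin (N+1) → Fin (m+1) => Tuple.sort w = π).card
      = (N + 1 + m - descents π).choose (N+1) := by
  have h := cnt N m (fun i => π i.succ < π i.castSucc)
    (fun i => (univ.filter fun j : Fin N => j.castSucc < i ∧ ¬ π j.succ < π j.castSucc).card)
    (by simp) (by
      intro i
      have : (univ.filter fun j : Fin N => j.castSucc < i.succ ∧ ¬ π j.succ < π j.castSucc)
       = (univ.filter fun j : Fin N => j.castSucc < i.castSucc ∧ ¬ π j.succ < π j.castSucc)
        ∪ (if π i.succ < π i.castSucc then ∅ else {i}) := by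
        ext j
        have : j.castSucc < i.succ ↔ j.castSucc < i.castSucc ∨ j = i := by
          rw [Fin.lt_def, Fin.lt_def, Fin.ext_iff]; simp only [Fin.val_castSucc, Fin.val_succ]; omega
        split_ifs <;> simp only [mem_filter, mem_univ, true_and, mem_union, this, notMem_empty,
          mem_singleton] <;> grind
      rw [this, card_union_of_disjoint]
      · split_ifs <;> simp
      · rw [Finset.disjoint_left]
        intro j
        split_ifs <;> simp
        grind)
  have h2 : (univ.filter fun j : Fin N => j.castSucc < Fin.last N ∧ ¬ π j.succ < π j.castSucc).card
      + descents π = N := by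
    rw [descents_eq]
    have := Finset.card_filter_add_card_filter_not (s := (univ : Finset (Fin N)))
      (fun j => π j.succ < π j.castSucc)
    simp only [card_univ, Fintype.card_fin] at this
    simp only [Fin.castSucc_lt_last, true_and]
    omega
  rw [show N + 1 + m - descents π = m + 1 + (univ.filter fun j : Fin N =>
    j.castSucc < Fin.last N ∧ ¬ π j.succ < π j.castSucc).card by omega, ← h,
    ← Fintype.card_subtype, ← Nat.card_eq_fintype_card]
  apply Nat.card_congr
  refine Equiv.subtypeEquiv (Equiv.arrowCongr π.symm (Equiv.refl _)) ?_
  intro w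
  rw [sort_eq_iff]
  rfl

theorem descents_le {n : ℕ} (π : Equiv.Perm (Fin n)) : descents π ≤ n := by
  unfold descents
  exact (card_le_univ _).trans (by simp)

theorem derDes_big (n : ℕ) (k : ℤ) (h : (n : ℤ) < k) : derDes n k = 0 := by
  unfold derDes
  rw [card_eq_zero, filter_eq_empty_iff]
  intro π _
  have := descents_le π
  omega

theorem derDes_neg (n : ℕ) (k : ℤ) (h : k < 0) : derDes n k = 0 := by
  unfold derDes
  rw [card_eq_zero, filter_eq_empty_iff]
  intro π _
  omega

theorem HH_sum (m n : ℕ) : HH (m+1) n univ =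
    ∑ k ∈ range (n+1), derDes n k * (n + m - k).choose n := by
  cases n with
  | zero =>
    rw [HH_zero]
    simp
    decide
  | succ N =>
    rw [HH_univ]
    rw [Finset.card_eq_sum_card_fiberwise (f := fun w => Tuple.sort w) (t := derangementSet (N+1))
      (by intro w hw; simpa using hw)]
    have : ∀ π ∈ derangementSet (N+1),
        ((univ.filter fun w : Fin (N+1) → Fin (m+1) => Tuple.sort w ∈ derangementSet (N+1)).filter
          fun w => Tuple.sort w = π).card = (N + 1 + m - descents π).choose (N+1) := by
      intro π hπ
      rw [← fiber, filter_filter]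
      congr 1
      ext w
      simp only [mem_filter, mem_univ, true_and]
      constructor
      · exact fun h => h.2
      · rintro rfl; exact ⟨hπ, rfl⟩
    rw [sum_congr rfl this]
    rw [← sum_fiberwise_of_maps_to (s := derangementSet (N+1)) (t := range (N+1+1))
      (g := fun π => descents π) (by
        intro π _; rw [mem_range]; have := descents_le π; omega)]
    apply sum_congr rfl
    intro k _
    unfold derDes
    simp only [Nat.cast_inj]
    rw [← smul_eq_mul, ← sum_const]
    apply sum_congr rfl
    intro π hπ
    rw [mem_filter] at hπ
    rw [hπ.2]

theorem worp (m n k : ℕ) (hk : k ≤ n) :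
    ((m : ℤ) + 1) * ((n + m - k).choose n : ℤ) = (k + 1) * ((n + 1 + m - k).choose (n+1) : ℤ)
      + ((n : ℤ) - k) * ((n + 1 + m - (k+1)).choose (n+1) : ℤ) := by
  obtain ⟨a, ha⟩ : ∃ a, a + k = n + m := ⟨n + m - k, by omega⟩
  rw [show n + m - k = a by omega, show n + 1 + m - k = a + 1 by omega,
    show n + 1 + m - (k+1) = a by omega, Nat.choose_succ_succ]
  have h : ((a.choose (n+1) : ℤ)) * (n + 1) = a.choose n * ((m : ℤ) - k) := by
    have := Nat.choose_succ_right_eq a n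
    zify at this
    rw [this]
    rcases lt_or_ge a n with h | h
    · simp [Nat.choose_eq_zero_of_lt h]
    · rw [Nat.cast_sub h]
      have : (a : ℤ) + k = n + m := by exact_mod_cast ha
      rw [show (a : ℤ) - n = m - k by linarith]
  push_cast
  linear_combination -h

theorem triang (n : ℕ) (g : ℕ → ℤ)
    (h : ∀ m, ∑ k ∈ range (n+2), g k * ((n + 1 + m - k).choose (n+1) : ℤ) = 0) :
    ∀ k, k ≤ n + 1 → g k = 0 := by
  intro k
  induction k using Nat.strong_induction_on with
  | _ k ih =>
    intro hk
    have := h k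
    rw [Finset.sum_eq_single k] at this
    · simpa using this
    · intro j hj hjk
      rw [mem_range] at hj
      rcases lt_or_gt_of_ne hjk with h1 | h1
      · rw [ih j h1 (by omega)]; simp
      · rw [Nat.choose_eq_zero_of_lt (by omega)]; simp
    · intro h; simp at h; omega

theorem first_order_nat (n k : ℕ) (hk : k ≤ n + 1) :
    (derDes (n+1) k : ℤ) - (k + 1) * derDes n k - ((n : ℤ) + 1 - k) * derDes n ((k : ℤ) - 1)
      - (if k = n then (-1)^(n+1) else 0) = 0 := by
  revert k
  apply triang n
  intro m
  have h := HH_rec (m+1) univ n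
  rw [HH_sum, HH_sum] at h
  simp only [sub_mul, sum_sub_distrib]
  have h1 : ∑ k ∈ range (n+2), (if k = n then (-1 : ℤ)^(n+1) else 0) *
      ((n + 1 + m - k).choose (n+1) : ℤ) = (-1)^(n+1) * ((m+1).choose (n+1) : ℤ) := by
    rw [Finset.sum_eq_single n]
    · rw [if_pos rfl, show n + 1 + m - n = m + 1 by omega]
    · intro b _ hb; simp [hb]
    · intro h; simp at h
  have h2 : ∑ k ∈ range (n+2), ((k : ℤ) + 1) * derDes n k * ((n + 1 + m - k).choose (n+1) : ℤ)
     = ∑ k ∈ range (n+1), ((k : ℤ) + 1) * derDes n k * ((n + 1 + m - k).choose (n+1) : ℤ) := by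
    rw [sum_range_succ, derDes_big n ((n+1 : ℕ) : ℤ) (by push_cast; omega)]; simp
  have h3 : ∑ k ∈ range (n+2), ((n : ℤ) + 1 - k) * derDes n ((k : ℤ) - 1) *
      ((n + 1 + m - k).choose (n+1) : ℤ)
     = ∑ k ∈ range (n+1), ((n : ℤ) - k) * derDes n k * ((n + 1 + m - (k+1)).choose (n+1) : ℤ) := by
    rw [sum_range_succ', derDes_neg n (((0 : ℕ) : ℤ) - 1) (by simp)]
    simp
  have h4 : ((m : ℤ) + 1) * ∑ k ∈ range (n+1), (derDes n k : ℤ) * ((n + m - k).choose n : ℤ)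
     = ∑ k ∈ range (n+1), ((k : ℤ) + 1) * derDes n k * ((n + 1 + m - k).choose (n+1) : ℤ)
     + ∑ k ∈ range (n+1), ((n : ℤ) - k) * derDes n k * ((n + 1 + m - (k+1)).choose (n+1) : ℤ) := by
    rw [mul_sum, ← sum_add_distrib]
    apply sum_congr rfl
    intro k hk
    rw [mem_range] at hk
    have := worp m n k (by omega)
    linear_combination (derDes n k : ℤ) * this
  simp only [sub_mul, sum_sub_distrib] at h1 h2 h3 h4 ⊢
  simp only [card_univ, Fintype.card_fin] at h
  push_cast at h
  rw [h1, h2, h3, ← sub_eq_zero.2 h]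
  linear_combination h4

theorem first_order (n : ℕ) (k : ℤ) :
    (derDes (n+1) k : ℤ) = (k + 1) * derDes n k + ((n : ℤ) + 1 - k) * derDes n (k - 1)
      + (if k = n then (-1)^(n+1) else 0) := by
  rcases lt_or_ge k 0 with h | h
  · rw [derDes_neg _ _ h, derDes_neg _ _ h, derDes_neg _ _ (by omega), if_neg (by omega)]; simp
  · rcases lt_or_ge ((n : ℤ) + 1) k with h' | h'
    · rw [derDes_big _ _ (by push_cast; omega), derDes_big _ _ (by omega),
        derDes_big _ _ (by omega), if_neg (by omega)]; simp
    · lift k to ℕ using h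
      have := first_order_nat n k (by omega)
      simp only [Nat.cast_inj]
      linarith

/-- The second-order recurrence for the numbers `D_{n,k}` of derangements with `k` descents. -/
theorem derDes_recurrence (n : ℕ) (k : ℤ) (hn : 2 ≤ n) (hk : 0 ≤ k) :
    (derDes n k : ℤ) =
      (k + 1) * derDes (n - 1) k + ((n : ℤ) - k - 1) * derDes (n - 1) (k - 1) +
        k * derDes (n - 2) (k - 1) + ((n : ℤ) - k) * derDes (n - 2) (k - 2) := by
  obtain ⟨n, rfl⟩ : ∃ j, n = j + 2 := ⟨n - 2, by omega⟩
  have h1 := first_order (n+1) k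
  have h2 := first_order n (k-1)
  rw [show k - 1 - 1 = k - 2 by ring] at h2
  rw [show n + 2 - 1 = n + 1 by omega, show n + 2 - 2 = n by omega]
  push_cast at *
  by_cases hkn : k = n + 1
  · rw [if_pos (by omega)] at h1 h2
    rw [pow_succ] at h1
    linear_combination h1 + h2
  · rw [if_neg (by omega)] at h1 h2
    linear_combination h1 + h2
end

section
/- For every integer n ≥ 1, the expected number of descents of a uniformly random involution of S_n equals (n−1)/2; equivalently, 2 · Σ_{π ∈ S_n, π² = id} des(π) = (n−1) · i_n, where des(π) is the number of descents of π and i_n is the number of involutions in S_n. -/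
open Finset

/-- Local modification toggling the descent between positions `a` and `b`. -/
def flipAt {n : ℕ} (a b : Fin n) (π : Equiv.Perm (Fin n)) : Equiv.Perm (Fin n) :=
  if (π a = a ∧ π b = b) ∨ (π a = b ∧ π b = a) then Equiv.swap a b * π
  else Equiv.swap a b * π * Equiv.swap a b

lemma mem_invol {n : ℕ} (π : Equiv.Perm (Fin n)) :
    π ∈ involutions n ↔ ∀ x, π (π x) = x := by
  simp [involutions, Equiv.ext_iff]

lemma flipAt_mem {n : ℕ} (a b : Fin n) (π : Equiv.Perm (Fin n))
    (h : π ∈ involutions n) : flipAt a b π ∈ involutions n := by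
  rw [mem_invol] at *
  intro x
  unfold flipAt
  split_ifs with hc
  · have hx := h x
    have inj := π.injective
    simp only [Equiv.Perm.mul_apply, Equiv.swap_apply_def]
    grind
  · simp [h]

lemma flipAt_flipAt {n : ℕ} (a b : Fin n) (hab : a ≠ b) (π : Equiv.Perm (Fin n)) :
    flipAt a b (flipAt a b π) = π := by
  by_cases hc : (π a = a ∧ π b = b) ∨ (π a = b ∧ π b = a)
  · have h1 : flipAt a b π = Equiv.swap a b * π := by rw [flipAt, if_pos hc]
    rw [h1, flipAt, if_pos]
    · simp [← mul_assoc]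
    · rcases hc with ⟨h, h'⟩ | ⟨h, h'⟩ <;> simp [h, h']
  · have h1 : flipAt a b π = Equiv.swap a b * π * Equiv.swap a b := by rw [flipAt, if_neg hc]
    rw [h1, flipAt, if_neg]
    · simp [mul_assoc]
    · intro h
      apply hc
      simp only [Equiv.Perm.mul_apply, Equiv.swap_apply_left, Equiv.swap_apply_right] at h
      simp only [Equiv.swap_apply_def] at h
      grind

lemma flipAt_lt {n : ℕ} (a b : Fin n) (hab : (b : ℕ) = a + 1) (π : Equiv.Perm (Fin n)) 
    (h : π ∈ involutions n) :
    flipAt a b π b < flipAt a b π a ↔ ¬ (π b < π a) := by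
  rw [mem_invol] at h
  have ha := h a
  have hb := h b
  have hne : π a ≠ π b := fun e => by
    have := π.injective e
    rw [this] at hab; omega
  unfold flipAt
  split_ifs with hc
  · rcases hc with ⟨h, h'⟩ | ⟨h, h'⟩ <;>
      simp only [Equiv.Perm.mul_apply, h, h', Equiv.swap_apply_left, Equiv.swap_apply_right,
        Fin.lt_def] <;> omega
  · simp only [Equiv.Perm.mul_apply, Equiv.swap_apply_left, Equiv.swap_apply_right]
    simp only [Equiv.swap_apply_def]
    simp only [Fin.lt_def]
    simp only [Fin.ext_iff, ne_eq] at *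
    grind

lemma half {n : ℕ} (a b : Fin n) (hab : (b : ℕ) = a + 1) :
    2 * ((involutions n).filter fun π => π b < π a).card = (involutions n).card := by
  have hne : a ≠ b := by
    intro e; rw [e] at hab; omega
  have h : ((involutions n).filter fun π => π b < π a).card
      = ((involutions n).filter fun π => ¬ π b < π a).card := by
    refine Finset.card_bij' (fun π _ => flipAt a b π) (fun π _ => flipAt a b π) ?_ ?_ ?_ ?_
    · intro π hπ
      rw [Finset.mem_filter] at *
      exact ⟨flipAt_mem a b π hπ.1, by rw [flipAt_lt a b hab π hπ.1]; simpa using hπ.2⟩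
    · intro π hπ
      rw [Finset.mem_filter] at *
      exact ⟨flipAt_mem a b π hπ.1, by rw [flipAt_lt a b hab π hπ.1]; exact hπ.2⟩
    · intro π _; exact flipAt_flipAt a b hne π
    · intro π _; exact flipAt_flipAt a b hne π
  have := Finset.card_filter_add_card_filter_not (s := involutions n) (fun π => π b < π a)
  omega

lemma main_nat (n : ℕ) (hn : 1 ≤ n) :
    2 * ∑ π ∈ involutions n, descents π = (n - 1) * (involutions n).card := by
  obtain ⟨m, rfl⟩ : ∃ m, n = m + 1 := ⟨n - 1, by omega⟩
  have hd : ∀ π : Equiv.Perm (Fin (m + 1)),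
      descents π = ∑ i : Fin m, if π i.succ < π i.castSucc then 1 else 0 := by
    intro π
    unfold descents
    rw [Finset.card_filter, Fin.sum_univ_castSucc]
    simp [Fin.succ]
  simp_rw [hd]
  rw [Finset.sum_comm, Finset.mul_sum]
  simp_rw [← Finset.card_filter]
  rw [Finset.sum_congr rfl (fun i _ => half i.castSucc i.succ (by simp))]
  simp

theorem mean_descents_involutions (n : ℕ) (hn : 1 ≤ n) :
    (∑ π ∈ involutions n, (descents π : ℝ)) / (involutions n).card = ((n : ℝ) - 1) / 2 ∧
      2 * ∑ π ∈ involutions n, descents π = (n - 1) * (involutions n).card := by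
  have h := main_nat n hn
  refine ⟨?_, h⟩
  have hpos : 0 < (involutions n).card :=
    Finset.card_pos.mpr ⟨1, by rw [mem_invol]; simp⟩
  have hpos' : ((involutions n).card : ℝ) ≠ 0 := by positivity
  have h' := congrArg (Nat.cast : ℕ → ℝ) h
  push_cast [Nat.cast_sub hn] at h'
  rw [div_eq_div_iff hpos' two_ne_zero]
  linarith
end

section
/- There exists a constant C > 0 such that for every integer n ≥ 1, the fourth central moment of the number of descents of a uniformly random involution of S_n is at most C·n²; equivalently, Σ_{π ∈ S_n, π² = id} (des(π) − (n−1)/2)⁴ ≤ C · n² · i_n. -/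
open Finset

noncomputable def XX {m : ℕ} (i : Fin m) (π : Equiv.Perm (Fin (m+1))) : ℝ :=
  if π i.succ < π i.castSucc then 1/2 else -(1/2)

noncomputable def DD {m : ℕ} (π : Equiv.Perm (Fin (m+1))) : ℝ := ∑ i : Fin m, XX i π

lemma DD_eq {m : ℕ} (π : Equiv.Perm (Fin (m+1))) :
    (descents π : ℝ) - (((m+1 : ℕ) : ℝ) - 1) / 2 = DD π := by
  have h1 : (descents π : ℝ) =
      ∑ i : Fin m, (if π i.succ < π i.castSucc then (1:ℝ) else 0) := by
    unfold descents
    rw [Finset.card_filter]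
    push_cast
    rw [Fin.sum_univ_castSucc]
    have h2 : ¬ (∃ h : ((Fin.last m : Fin (m+1)) : ℕ) + 1 < m + 1,
        π ⟨((Fin.last m : Fin (m+1)) : ℕ) + 1, h⟩ < π (Fin.last m)) := by
      rintro ⟨h, -⟩
      simp at h
    rw [if_neg h2, add_zero]
    apply Finset.sum_congr rfl
    intro i _
    have h3 : (∃ h : ((i.castSucc : Fin (m+1)) : ℕ) + 1 < m + 1,
        π ⟨((i.castSucc : Fin (m+1)) : ℕ) + 1, h⟩ < π i.castSucc) ↔
        π i.succ < π i.castSucc := by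
      constructor
      · rintro ⟨h, h'⟩
        exact h'
      · intro h
        exact ⟨by simp, h⟩
    simp only [h3]
  have h4 : DD π = ∑ i : Fin m, ((if π i.succ < π i.castSucc then (1:ℝ) else 0) - 1/2) := by
    unfold DD XX
    apply Finset.sum_congr rfl
    intro i _
    split_ifs <;> norm_num
  rw [h4, Finset.sum_sub_distrib, h1]
  simp
  ring

def sw {m : ℕ} (i : Fin m) : Equiv.Perm (Fin (m+1)) := Equiv.swap i.castSucc i.succ

def TT {m : ℕ} (i : Fin m) (π : Equiv.Perm (Fin (m+1))) : Equiv.Perm (Fin (m+1)) :=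
  if π * sw i = sw i * π then π * sw i else sw i * π * sw i

lemma sw_sw {m : ℕ} (i : Fin m) : sw i * sw i = 1 := Equiv.swap_mul_self _ _

lemma TT_TT {m : ℕ} (i : Fin m) (π : Equiv.Perm (Fin (m+1))) : TT i (TT i π) = π := by
  have hs := sw_sw i
  unfold TT
  generalize sw i = s at *
  by_cases h : π * s = s * π
  · rw [if_pos h, if_pos]
    · rw [mul_assoc, hs, mul_one]
    · rw [← mul_assoc, ← h]
  · rw [if_neg h, if_neg]
    · rw [mul_assoc, mul_assoc, mul_assoc, hs, mul_one, ← mul_assoc, hs, one_mul]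
    · intro h'
      apply h
      have e1 : s * π * s * s = s * π := by rw [mul_assoc, hs, mul_one]
      have e2 : s * (s * π * s) = π * s := by rw [← mul_assoc, ← mul_assoc, hs, one_mul]
      rw [e1, e2] at h'
      exact h'.symm

lemma TT_mem {m : ℕ} (i : Fin m) (π : Equiv.Perm (Fin (m+1))) (hπ : π ∈ involutions (m+1)) :
    TT i π ∈ involutions (m+1) := by
  have hs := sw_sw i
  simp only [involutions, mem_filter, mem_univ, true_and] at *
  unfold TT
  generalize sw i = s at *
  split_ifs with h
  · calc π * s * (π * s) = π * (s * π) * s := by group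
      _ = π * (π * s) * s := by rw [h]
      _ = (π * π) * (s * s) := by group
      _ = 1 := by rw [hπ, hs, mul_one]
  · calc s * π * s * (s * π * s) = s * π * (s * s) * π * s := by group
      _ = s * (π * π) * s := by rw [hs]; group
      _ = 1 := by rw [hπ, mul_one, hs]

lemma sw_lt {m : ℕ} (i : Fin m) (x y : Fin (m+1)) (hxy : x ≠ y)
    (h1 : ¬ (x = i.castSucc ∧ y = i.succ)) (h2 : ¬ (x = i.succ ∧ y = i.castSucc)) :
    sw i x < sw i y ↔ x < y := by
  unfold sw
  rw [Equiv.swap_apply_def, Equiv.swap_apply_def]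
  split_ifs <;> simp only [Fin.lt_def, Fin.ext_iff, Fin.val_castSucc, Fin.val_succ, ne_eq] at * <;> omega

lemma XX_flip {m : ℕ} (i : Fin m) (π : Equiv.Perm (Fin (m+1))) :
    XX i (TT i π) = - XX i π := by
  have hne : π i.castSucc ≠ π i.succ := by
    intro h
    have := π.injective h
    simp [Fin.ext_iff] at this
  have key : TT i π i.succ < TT i π i.castSucc ↔ π i.castSucc < π i.succ := by
    unfold TT
    split_ifs with h
    · simp [sw]
    · have hc : ∀ x, (sw i * π * sw i) x = sw i (π (sw i x)) := fun x => rfl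
      have ha : sw i i.castSucc = i.succ := by simp [sw]
      have hb : sw i i.succ = i.castSucc := by simp [sw]
      rw [hc, hc, ha, hb]
      have hm : π * sw i = Equiv.swap (π i.castSucc) (π i.succ) * π := by
        unfold sw
        exact Equiv.mul_swap_eq_swap_mul _ _ _
      apply sw_lt i _ _ hne
      · rintro ⟨h1, h2⟩
        apply h
        rw [hm, h1, h2, sw]
      · rintro ⟨h1, h2⟩
        apply h
        rw [hm, h1, h2, sw, Equiv.swap_comm]
  unfold XX
  simp only [key]
  rcases lt_or_gt_of_ne hne with h | h
  · rw [if_pos h, if_neg (not_lt.mpr h.le)]; norm_num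
  · rw [if_neg (not_lt.mpr h.le), if_pos h]

lemma XX_abs {m : ℕ} (i : Fin m) (π : Equiv.Perm (Fin (m+1))) : |XX i π| = 1/2 := by
  unfold XX
  split_ifs
  · rw [abs_of_pos] <;> norm_num
  · rw [abs_neg, abs_of_pos] <;> norm_num

lemma XX_local {m : ℕ} (i j : Fin m) (π : Equiv.Perm (Fin (m+1)))
    (h1 : j.castSucc ≠ i.castSucc) (h2 : j.castSucc ≠ i.succ)
    (h3 : j.succ ≠ i.castSucc) (h4 : j.succ ≠ i.succ)
    (h5 : π j.castSucc ≠ i.castSucc) (h6 : π j.castSucc ≠ i.succ) :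
    XX j (TT i π) = XX j π := by
  have hne : π j.succ ≠ π j.castSucc := by
    intro h
    have := π.injective h
    simp [Fin.ext_iff] at this
  have ha : sw i j.castSucc = j.castSucc := Equiv.swap_apply_of_ne_of_ne h1 h2
  have hb : sw i j.succ = j.succ := Equiv.swap_apply_of_ne_of_ne h3 h4
  have key : TT i π j.succ < TT i π j.castSucc ↔ π j.succ < π j.castSucc := by
    unfold TT
    split_ifs with h
    · rw [Equiv.Perm.mul_apply, Equiv.Perm.mul_apply, ha, hb]
    · have hc : ∀ x, (sw i * π * sw i) x = sw i (π (sw i x)) := fun x => rfl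
      rw [hc, hc, ha, hb]
      apply sw_lt i _ _ hne
      · rintro ⟨_, h⟩; exact h6 h
      · rintro ⟨_, h⟩; exact h5 h
  unfold XX
  simp only [key]

lemma DD_diff {m : ℕ} (i : Fin m) (π : Equiv.Perm (Fin (m+1))) (hπ : π ∈ involutions (m+1)) :
    |DD π - DD (TT i π)| ≤ 6 := by
  have hinv : ∀ x, π (π x) = x := by
    intro x
    simp only [involutions, mem_filter, mem_univ, true_and] at hπ
    rw [← Equiv.Perm.mul_apply, hπ]; rfl
  have cs : ∀ a : Fin (m+1), ∑ j : Fin m, (if j.castSucc = a then (1:ℝ) else 0) ≤ 1 := by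
    intro a
    rw [← Finset.sum_filter, Finset.sum_const, nsmul_eq_mul, mul_one]
    norm_cast
    rw [Finset.card_le_one]
    intro x hx y hy
    simp only [mem_filter, mem_univ, true_and] at hx hy
    exact Fin.castSucc_injective _ (hx.trans hy.symm)
  have ss : ∀ a : Fin (m+1), ∑ j : Fin m, (if j.succ = a then (1:ℝ) else 0) ≤ 1 := by
    intro a
    rw [← Finset.sum_filter, Finset.sum_const, nsmul_eq_mul, mul_one]
    norm_cast
    rw [Finset.card_le_one]
    intro x hx y hy
    simp only [mem_filter, mem_univ, true_and] at hx hy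
    exact Fin.succ_injective _ (hx.trans hy.symm)
  have hb : |DD π - DD (TT i π)| ≤ ∑ j : Fin m,
      ((if j.castSucc = i.castSucc then (1:ℝ) else 0) + (if j.castSucc = i.succ then (1:ℝ) else 0)
      + (if j.succ = i.castSucc then (1:ℝ) else 0) + (if j.succ = i.succ then (1:ℝ) else 0)
      + (if j.castSucc = π i.castSucc then (1:ℝ) else 0)
      + (if j.castSucc = π i.succ then (1:ℝ) else 0)) := by
    unfold DD
    rw [← Finset.sum_sub_distrib]
    refine (Finset.abs_sum_le_sum_abs _ _).trans (Finset.sum_le_sum ?_)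
    intro j _
    have hnn : ∀ (p : Prop) [Decidable p], (0:ℝ) ≤ if p then 1 else 0 := by
      intro p _; split_ifs <;> norm_num
    have h1 : |XX j π - XX j (TT i π)| ≤ 1 := by
      refine (abs_sub _ _).trans ?_
      rw [XX_abs, XX_abs]; norm_num
    have g1 := hnn (j.castSucc = i.castSucc)
    have g2 := hnn (j.castSucc = i.succ)
    have g3 := hnn (j.succ = i.castSucc)
    have g4 := hnn (j.succ = i.succ)
    have g5 := hnn (j.castSucc = π i.castSucc)
    have g6 := hnn (j.castSucc = π i.succ)
    by_cases c1 : j.castSucc = i.castSucc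
    · rw [if_pos c1] at *; linarith
    by_cases c2 : j.castSucc = i.succ
    · rw [if_pos c2] at *; linarith
    by_cases c3 : j.succ = i.castSucc
    · rw [if_pos c3] at *; linarith
    by_cases c4 : j.succ = i.succ
    · rw [if_pos c4] at *; linarith
    by_cases c5 : j.castSucc = π i.castSucc
    · rw [if_pos c5] at *; linarith
    by_cases c6 : j.castSucc = π i.succ
    · rw [if_pos c6] at *; linarith
    rw [XX_local i j π c1 c2 c3 c4 (fun h => c5 (by rw [← h, hinv])) (fun h => c6 (by rw [← h, hinv])),
      sub_self, abs_zero]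
    linarith
  simp only [Finset.sum_add_distrib] at hb
  linarith [cs i.castSucc, cs i.succ, ss i.castSucc, ss i.succ, cs (π i.castSucc), cs (π i.succ)]

lemma sum_TT {m : ℕ} (i : Fin m) (f : Equiv.Perm (Fin (m+1)) → ℝ) :
    ∑ π ∈ involutions (m+1), f (TT i π) = ∑ π ∈ involutions (m+1), f π :=
  Finset.sum_nbij' (TT i) (TT i) (fun π h => TT_mem i π h) (fun π h => TT_mem i π h)
    (fun π _ => TT_TT i π) (fun π _ => TT_TT i π) (fun _ _ => rfl)

lemma half_sum {m : ℕ} (i : Fin m) (g : ℝ → ℝ) :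
    ∑ π ∈ involutions (m+1), XX i π * g (DD π) =
    ∑ π ∈ involutions (m+1), (1/2) * (XX i π * (g (DD π) - g (DD (TT i π)))) := by
  have h := sum_TT i (fun π => XX i π * g (DD π))
  simp only [XX_flip] at h
  rw [← Finset.mul_sum]
  simp only [mul_sub, Finset.sum_sub_distrib]
  simp only [neg_mul, Finset.sum_neg_distrib] at h
  linarith

lemma second {m : ℕ} : ∑ π ∈ involutions (m+1), DD π ^ 2 ≤
    m * (3/2 * (involutions (m+1)).card) := by
  have h1 : ∑ π ∈ involutions (m+1), DD π ^ 2 =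
      ∑ i : Fin m, ∑ π ∈ involutions (m+1), XX i π * DD π := by
    rw [Finset.sum_comm]
    apply Finset.sum_congr rfl
    intro π _
    rw [← Finset.sum_mul, sq]; rfl
  rw [h1]
  have h2 : ∀ i : Fin m, ∑ π ∈ involutions (m+1), XX i π * DD π ≤
      3/2 * (involutions (m+1)).card := by
    intro i
    have := half_sum i (fun x => x)
    rw [this]
    calc _ ≤ ∑ π ∈ involutions (m+1), (3/2 : ℝ) := by
          apply Finset.sum_le_sum
          intro π hπ
          have e : XX i π * (DD π - DD (TT i π)) ≤ 1/2 * 6 := by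
            refine (le_abs_self _).trans ?_
            rw [abs_mul, XX_abs]
            have := DD_diff i π hπ
            linarith
          linarith
      _ = _ := by simp; ring
  calc _ ≤ ∑ i : Fin m, (3/2 * (involutions (m+1)).card : ℝ) := Finset.sum_le_sum fun i _ => h2 i
    _ = _ := by simp

lemma fourth {m : ℕ} : ∑ π ∈ involutions (m+1), DD π ^ 4 ≤
    m * (9/2 * ∑ π ∈ involutions (m+1), DD π ^ 2) := by
  have h1 : ∑ π ∈ involutions (m+1), DD π ^ 4 =
      ∑ i : Fin m, ∑ π ∈ involutions (m+1), XX i π * DD π ^ 3 := by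
    rw [Finset.sum_comm]
    apply Finset.sum_congr rfl
    intro π _
    rw [← Finset.sum_mul]
    change _ = DD π * _
    ring
  rw [h1]
  have h2 : ∀ i : Fin m, ∑ π ∈ involutions (m+1), XX i π * DD π ^ 3 ≤
      9/2 * ∑ π ∈ involutions (m+1), DD π ^ 2 := by
    intro i
    have := half_sum i (fun x => x ^ 3)
    rw [this]
    have hT := sum_TT i (fun π => DD π ^ 2)
    calc _ ≤ ∑ π ∈ involutions (m+1), (9/4 * (DD π ^ 2 + DD (TT i π) ^ 2) : ℝ) := by
          apply Finset.sum_le_sum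
          intro π hπ
          have e : XX i π * (DD π ^ 3 - DD (TT i π) ^ 3) ≤
              1/2 * (6 * (3/2 * (DD π ^ 2 + DD (TT i π) ^ 2))) := by
            refine (le_abs_self _).trans ?_
            rw [abs_mul, XX_abs]
            have hd := DD_diff i π hπ
            generalize DD π = x at *
            generalize DD (TT i π) = y at *
            have e1 : x ^ 3 - y ^ 3 = (x - y) * (x ^ 2 + x * y + y ^ 2) := by ring
            have e2 : |x ^ 2 + x * y + y ^ 2| ≤ 3/2 * (x ^ 2 + y ^ 2) := by
              rw [abs_le]
              constructor <;> nlinarith [sq_nonneg (x - y), sq_nonneg (x + y)]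
            rw [e1, abs_mul]
            have := mul_le_mul hd e2 (abs_nonneg _) (by norm_num)
            linarith
          linarith
      _ = _ := by rw [← Finset.mul_sum, Finset.sum_add_distrib, hT]; ring
  calc _ ≤ ∑ i : Fin m, (9/2 * ∑ π ∈ involutions (m+1), DD π ^ 2 : ℝ) :=
        Finset.sum_le_sum fun i _ => h2 i
    _ = _ := by simp

/-- The fourth central moment of the number of descents of a random involution of `S_n`
is `O(n²)`. -/
theorem fourth_moment_descents_involutions_le :
    ∃ C : ℝ, 0 < C ∧ ∀ n : ℕ, 1 ≤ n →
      ∑ π ∈ involutions n, ((descents π : ℝ) - ((n : ℝ) - 1) / 2) ^ 4 ≤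
        C * n ^ 2 * (involutions n).card := by
  refine ⟨27/4, by norm_num, ?_⟩
  intro n hn
  obtain ⟨m, rfl⟩ : ∃ m, n = m + 1 := ⟨n - 1, by omega⟩
  simp only [DD_eq]
  have h4 := fourth (m := m)
  have h2 := second (m := m)
  have hm : (0:ℝ) ≤ m := Nat.cast_nonneg m
  have hc : (0:ℝ) ≤ (involutions (m+1)).card := Nat.cast_nonneg _
  have h5 := mul_le_mul_of_nonneg_left h2 (mul_nonneg hm (by norm_num : (0:ℝ) ≤ 9/2))
  push_cast
  have h6 : (m:ℝ) ^ 2 * (involutions (m+1)).card ≤ ((m:ℝ) + 1) ^ 2 * (involutions (m+1)).card := by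
    apply mul_le_mul_of_nonneg_right _ hc
    nlinarith
  nlinarith
end

section
/- There exists a constant C > 0 such that for every integer n ≥ 3, the expected number of descents μ_n of a uniformly random derangement of S_n satisfies | μ_n − (n−1)/2 − 1/(2n) | ≤ C / (n−2)!, where μ_n = (Σ_{π derangement of {1,…,n}} des(π)) / d_n. -/
open Finset

/-- Mean number of descents of a uniformly random derangement of `S_n`. -/
noncomputable def derMean (n : ℕ) : ℝ :=
  (∑ π ∈ derangementSet n, (descents π : ℝ)) / (derangementSet n).card

theorem aux_card (n : ℕ) : (derangementSet n).card = numDerangements n := by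
  rw [← card_derangements_fin_eq_numDerangements, Fintype.card_subtype]
  congr 1
  ext π
  simp only [derangementSet, mem_filter, mem_univ, true_and]
  exact Iff.rfl

theorem aux_cyc (n : ℕ) (a b : Fin n) (hab : b.val = a.val + 1) :
    ((derangementSet n).filter fun π => π a = b ∧ π b = a).card = numDerangements (n - 2) := by
  have hne : a ≠ b := by intro h; rw [h] at hab; omega
  have h1 := card_derangements_eq_numDerangements {x : Fin n // x ≠ a ∧ x ≠ b}
  have h2 : Fintype.card {x : Fin n // x ≠ a ∧ x ≠ b} = n - 2 := by
    rw [Fintype.card_subtype]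
    have : (univ.filter fun x : Fin n => x ≠ a ∧ x ≠ b) = ({a, b} : Finset (Fin n))ᶜ := by
      ext x; simp
    rw [this, Finset.card_compl, Finset.card_pair hne, Fintype.card_fin]
  rw [h2, Fintype.card_congr (derangements.subtypeEquiv (fun x : Fin n => x ≠ a ∧ x ≠ b)),
    Fintype.card_subtype] at h1
  rw [← h1]
  refine Finset.card_bij' (fun π _ => Equiv.swap a b * π) (fun π _ => Equiv.swap a b * π)
    ?_ ?_ ?_ ?_
  · intro π hπ
    simp only [derangementSet, mem_filter, mem_univ, true_and] at hπ ⊢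
    obtain ⟨hd, h1, h2⟩ := hπ
    intro x
    simp only [Function.mem_fixedPoints, Function.IsFixedPt, Equiv.Perm.mul_apply]
    by_cases hxa : x = a
    · subst hxa; simp [h1]
    by_cases hxb : x = b
    · subst hxb; simp [h2]
    have e1 : π x ≠ b := fun h => hxa (π.injective (h.trans h1.symm))
    have e2 : π x ≠ a := fun h => hxb (π.injective (h.trans h2.symm))
    rw [Equiv.swap_apply_of_ne_of_ne e2 e1]
    simp [hxa, hxb, hd x]
  · intro π hπ
    simp only [derangementSet, mem_filter, mem_univ, true_and, Function.mem_fixedPoints,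
      Function.IsFixedPt] at hπ ⊢
    have ha : π a = a := (hπ a).1 (by simp)
    have hb : π b = b := (hπ b).1 (by simp)
    refine ⟨?_, by simp [ha], by simp [hb]⟩
    intro x
    simp only [Equiv.Perm.mul_apply]
    by_cases hxa : x = a
    · subst hxa; simpa [ha] using hne.symm
    by_cases hxb : x = b
    · subst hxb; simpa [hb] using hne
    have e1 : π x ≠ b := fun h => hxb (π.injective (h.trans hb.symm))
    have e2 : π x ≠ a := fun h => hxa (π.injective (h.trans ha.symm))
    rw [Equiv.swap_apply_of_ne_of_ne e2 e1]
    intro h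
    exact ((hπ x).2 h) ⟨hxa, hxb⟩
  · intro π _; simp
  · intro π _; simp

theorem aux_key (n : ℕ) (a b : Fin n) (hab : b.val = a.val + 1) :
    ∑ π ∈ derangementSet n, (if π b < π a then (1 : ℝ) else -1) = numDerangements (n - 2) := by
  have hne : a ≠ b := by intro h; rw [h] at hab; omega
  have hlt : a < b := by rw [Fin.lt_def]; omega
  rw [← Finset.sum_filter_add_sum_filter_not _ (fun π => π a = b ∧ π b = a), ← aux_cyc n a b hab]
  have e1 : ∑ π ∈ (derangementSet n).filter (fun π => π a = b ∧ π b = a),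
      (if π b < π a then (1 : ℝ) else -1)
      = (((derangementSet n).filter fun π => π a = b ∧ π b = a).card : ℝ) := by
    rw [Finset.card_eq_sum_ones, Nat.cast_sum]
    refine Finset.sum_congr rfl fun π hπ => ?_
    rw [mem_filter] at hπ
    simp [hπ.2.1, hπ.2.2, hlt]
  rw [e1, add_eq_left]
  refine Finset.sum_involution
    (fun π _ => if π a = b ∨ π b = a then Equiv.swap a b * π * Equiv.swap a b
      else π * Equiv.swap a b) ?_ ?_ ?_ ?_
  · intro π hπ
    simp only [derangementSet, mem_filter, mem_univ, true_and] at hπ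
    obtain ⟨hd, hc⟩ := hπ
    have hinj : π a ≠ π b := fun h => hne (π.injective h)
    have hda := hd a
    have hdb := hd b
    split_ifs with h h1 h2 h2 <;> try norm_num
    all_goals exfalso
    all_goals simp only [Equiv.Perm.mul_apply, Equiv.swap_apply_left, Equiv.swap_apply_right,
      Equiv.swap_apply_def] at *
    all_goals grind
  · intro π hπ _ heq
    have hinj : π a ≠ π b := fun h => hne (π.injective h)
    simp only [derangementSet, mem_filter, mem_univ, true_and] at hπ
    obtain ⟨hd, hc⟩ := hπ
    have hh := congrArg (fun f : Equiv.Perm (Fin n) => f a) heq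
    have hh' := congrArg (fun f : Equiv.Perm (Fin n) => f b) heq
    split_ifs at hh hh' with h
    all_goals simp only [Equiv.Perm.mul_apply, Equiv.swap_apply_left, Equiv.swap_apply_right,
      Equiv.swap_apply_def] at *
    all_goals grind
  · intro π hπ
    have hinj : π a ≠ π b := fun h => hne (π.injective h)
    simp only [derangementSet, mem_filter, mem_univ, true_and] at hπ ⊢
    obtain ⟨hd, hc⟩ := hπ
    split_ifs with h
    · refine ⟨fun i => ?_, ?_⟩
      · intro h'
        simp only [Equiv.Perm.mul_apply] at h'
        apply hd (Equiv.swap a b i)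
        rw [← Equiv.swap_apply_self a b (π (Equiv.swap a b i)), h']
      · simp only [Equiv.Perm.mul_apply, Equiv.swap_apply_left, Equiv.swap_apply_right,
          Equiv.swap_apply_def]
        grind
    · refine ⟨fun i => ?_, ?_⟩
      · have := hd i
        simp only [Equiv.Perm.mul_apply, Equiv.swap_apply_def]
        grind
      · have := hd a
        simp only [Equiv.Perm.mul_apply, Equiv.swap_apply_left, Equiv.swap_apply_right]
        grind
  · intro π hπ
    have hinj : π a ≠ π b := fun h => hne (π.injective h)
    simp only [derangementSet, mem_filter, mem_univ, true_and] at hπ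
    obtain ⟨hd, hc⟩ := hπ
    have hda := hd a
    have hdb := hd b
    by_cases h : π a = b ∨ π b = a
    · have h2 : (Equiv.swap a b * π * Equiv.swap a b) a = b ∨
          (Equiv.swap a b * π * Equiv.swap a b) b = a := by
        simp only [Equiv.Perm.mul_apply, Equiv.swap_apply_left, Equiv.swap_apply_right,
          Equiv.swap_apply_def]
        grind
      simp only [if_pos h, if_pos h2]
      ext x; simp
    · have h2 : ¬ ((π * Equiv.swap a b) a = b ∨ (π * Equiv.swap a b) b = a) := by
        simp only [Equiv.Perm.mul_apply, Equiv.swap_apply_left, Equiv.swap_apply_right]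
        grind
      simp only [if_neg h, if_neg h2]
      ext x; simp

theorem aux_sum (m : ℕ) :
    ∑ π ∈ derangementSet (m + 1), (descents π : ℝ)
      = m * ((numDerangements (m + 1) : ℝ) + numDerangements (m - 1)) / 2 := by
  have h1 : ∀ π : Equiv.Perm (Fin (m + 1)), (descents π : ℝ)
      = ∑ i : Fin m, ((if π i.succ < π i.castSucc then (1 : ℝ) else -1) + 1) / 2 := by
    intro π
    unfold descents
    rw [Finset.card_filter, Nat.cast_sum, Fin.sum_univ_castSucc]
    simp only [Fin.val_last, lt_irrefl, IsEmpty.exists_iff, if_false, Nat.cast_zero, add_zero]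
    refine Finset.sum_congr rfl fun i _ => ?_
    have : (∃ h : (i.castSucc : ℕ) + 1 < m + 1, π ⟨(i.castSucc : ℕ) + 1, h⟩ < π i.castSucc)
        ↔ π i.succ < π i.castSucc := by
      constructor
      · rintro ⟨h, h'⟩; exact h'
      · intro h; exact ⟨by simp, h⟩
    simp only [this]
    split_ifs <;> norm_num
  simp only [h1]
  rw [Finset.sum_comm]
  have h2 : ∀ i : Fin m, ∑ π ∈ derangementSet (m + 1),
      ((if π i.succ < π i.castSucc then (1 : ℝ) else -1) + 1) / 2
      = ((numDerangements (m + 1) : ℝ) + numDerangements (m - 1)) / 2 := by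
    intro i
    rw [← Finset.sum_div, Finset.sum_add_distrib, aux_key (m + 1) i.castSucc i.succ (by simp)]
    simp only [sum_const, nsmul_eq_mul, mul_one, aux_card]
    rw [add_comm]
    rfl
  simp only [h2, sum_const, card_univ, Fintype.card_fin, nsmul_eq_mul]
  ring

theorem aux_lower (k : ℕ) : k.factorial ≤ numDerangements (k + 2) := by
  induction k with
  | zero => simp [numDerangements_add_two]
  | succ k ih =>
    rw [numDerangements_add_two, Nat.factorial_succ]
    exact Nat.mul_le_mul (by omega) (le_trans ih (Nat.le_add_left _ _))

/-- `μ_n = (n-1)/2 + 1/(2n) + O(1/(n-2)!)` for the expected number of descents of a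
uniformly random derangement. -/
theorem mean_descents_derangements_asymptotic :
    ∃ C : ℝ, 0 < C ∧ ∀ n : ℕ, 3 ≤ n →
      |derMean n - ((n : ℝ) - 1) / 2 - 1 / (2 * n)| ≤ C / (Nat.factorial (n - 2) : ℝ) := by
  refine ⟨1, one_pos, fun n hn => ?_⟩
  obtain ⟨k, rfl⟩ : ∃ k, n = k + 2 := ⟨n - 2, by omega⟩
  have hs := aux_sum (k + 1)
  have hl : (k.factorial : ℝ) ≤ numDerangements (k + 2) := by exact_mod_cast aux_lower k
  have hf : (0 : ℝ) < k.factorial := by exact_mod_cast k.factorial_pos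
  have r1 : (numDerangements (k + 1) : ℝ) = (k + 1) * numDerangements k - (-1) ^ k := by
    exact_mod_cast numDerangements_succ k
  have r2 : (numDerangements (k + 2) : ℝ)
      = (k + 1 + 1) * numDerangements (k + 1) - (-1) ^ (k + 1) := by
    exact_mod_cast numDerangements_succ (k + 1)
  have hd : (0 : ℝ) < numDerangements (k + 2) := lt_of_lt_of_le hf hl
  unfold derMean
  rw [aux_card, hs]
  simp only [Nat.add_sub_cancel]
  have hk : (0 : ℝ) < (k : ℝ) + 2 := by positivity
  have e : ((k + 1 : ℕ) : ℝ) * ((numDerangements (k + 1 + 1) : ℝ) + numDerangements k) / 2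
        / numDerangements (k + 2) - (((k + 2 : ℕ) : ℝ) - 1) / 2 - 1 / (2 * ((k + 2 : ℕ) : ℝ))
      = (-1) ^ k * ((k + 1) / (2 * (k + 2)) / numDerangements (k + 2)) := by
    push_cast
    field_simp
    have : (numDerangements (k + 1 + 1) : ℝ) = numDerangements (k + 2) := rfl
    rw [this, r2, r1, pow_succ]
    ring
  rw [e, abs_mul, abs_pow, abs_neg, abs_one, one_pow, one_mul, abs_of_nonneg (by positivity)]
  refine div_le_div₀ zero_le_one ?_ hf hl
  rw [div_le_one (by positivity)]
  linarith [Nat.cast_nonneg (α := ℝ) k]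
end
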